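/- arXiv:math/9910160 — 2 statements merged into one kernel-verified Lean document; each statement's English description precedes it below -/
import Mathlib

section
/- For every p with 2 ≤ p ≤ ∞, every n ≥ 1, and every continuous function f : B_{ℓ_pⁿ} → ℝ with ω₂(f;B_{ℓ_pⁿ}) ≤ 1, there exists an affine function φ on ℝⁿ such that sup_{x∈B_{ℓ_pⁿ}} |f(x) − φ(x)| ≤ 1602. (Theorem 3.8(c): sup_{2≤p≤∞} sup_n w₂(ℓ_pⁿ) ≤ 1602.) -/
open Finset

/-- `diffBound m K f c` says that the `m`-th modulus of smoothness of `f` on `K` is at most `c`,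
i.e. `|Δ_h^m f(x)| ≤ c` whenever `x, x+h, …, x+mh ∈ K`. -/
def diffBound {E : Type*} [AddCommGroup E] [Module ℝ E] (m : ℕ) (K : Set E) (f : E → ℝ)
    (c : ℝ) : Prop :=
  ∀ x h : E, (∀ j : ℕ, j ≤ m → x + (j : ℝ) • h ∈ K) →
    |∑ j ∈ Finset.range (m + 1), (-1 : ℝ) ^ (m - j) * (m.choose j : ℝ) * f (x + (j : ℝ) • h)| ≤ c

/-- The closed unit ball of `ℓ_pⁿ` (for real `p > 0`). -/
noncomputable def lpBall (n : ℕ) (p : ℝ) : Set (Fin n → ℝ) := {x | ∑ i, |x i| ^ p ≤ 1}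

/-- The closed unit ball of `ℓ_∞ⁿ`. -/
def lInftyBall (n : ℕ) : Set (Fin n → ℝ) := {x | ∀ i, |x i| ≤ 1}

/-!
The unit balls of `ℓ_p`, `2 ≤ p ≤ ∞`, are unconditional and 2-convex: a point whose squared
coordinates are dominated by averages of squared coordinates of points of the ball is in the ball.

Subtract an affine function so that `f 0 = 0` and `|f| ≤ K`. Approximate midpoint affinity costs
`k / 2` on means of `2 ^ k` points, while `|f x| ≤ 1 + K / a` if `a • x` is still in the ball; so
the mean of `f` over `4 ^ m` disjointly supported points is at most `m + 1 + K / 2 ^ m`. For a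
centred family, means of `2 ^ 19` independent samples are, outside a small set of samples for each
coordinate, small relative to the standard deviation, which is itself a point of the ball. The
remaining sparse family is cut into pieces and regrouped into disjointly supported families by
permutations in general position, as in the Kalton–Roberts concentrators. Hence `f` at a barycentre
and the mean of `f` differ by at most `83 + 3 / 4 * K`.

The closed convex hull of the graph of `f` is then thin in the vertical direction, and a hyperplane
separating two vertical translates of it gives a linear function that improves `K` to
`169 / 2 + 3 / 4 * K`. Iterating brings `K` below any number above `338`.
-/

open scoped BigOperators

section Averages

variable {α M : Type*} [AddCommGroup M] [Module ℝ M] [Module ℚ≥0 M]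

lemma expect_eq_inv_card_smul_sum (s : Finset α) (x : α → M) :
    𝔼 i ∈ s, x i = (#s : ℝ)⁻¹ • ∑ i ∈ s, x i := by
  rw [expect, ← NNRat.cast_smul_eq_nnqsmul ℝ]
  simp

lemma convex_expect_mem {C : Set M} (hC : Convex ℝ C) {s : Finset α} (hs : s.Nonempty) {x : α → M}
    (hx : ∀ i ∈ s, x i ∈ C) : 𝔼 i ∈ s, x i ∈ C := by
  rw [expect_eq_inv_card_smul_sum, smul_sum]
  have hcard : (#s : ℝ) ≠ 0 := by exact_mod_cast hs.card_ne_zero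
  exact hC.sum_mem (fun _ _ => by positivity) (by simp [hcard]) hx

lemma expect_eq_midpoint [DecidableEq α] {s t : Finset α} (hts : t ⊆ s) (hcard : #(s \ t) = #t)
    (x : α → M) : 𝔼 i ∈ s, x i = midpoint ℝ (𝔼 i ∈ s \ t, x i) (𝔼 i ∈ t, x i) := by
  have hs : (#s : ℝ) = 2 * #t := by
    have := card_sdiff_add_card_eq_card hts
    exact_mod_cast (by omega : #s = 2 * #t)
  simp only [expect_eq_inv_card_smul_sum, midpoint_eq_smul_add, hcard, hs, ← smul_add,
    sum_sdiff hts, smul_smul, mul_inv, invOf_eq_inv]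

lemma abs_expect_sub_expect_le {s : Finset α} (hs : s.Nonempty) {u v : α → ℝ} {r : ℝ}
    (h : ∀ i ∈ s, |u i - v i| ≤ r) : |𝔼 i ∈ s, u i - 𝔼 i ∈ s, v i| ≤ r := by
  rw [← expect_sub_distrib]
  exact (abs_expect_le _ _).trans (expect_le hs h)

end Averages

section ProductAverages

variable {M κ J : Type*} [AddCommMonoid M] [Module ℚ≥0 M] [Fintype κ] [Fintype J] [DecidableEq J]

lemma expect_pi_split (j : J) (G : κ → ({i // i ≠ j} → κ) → M) :
    𝔼 g : J → κ, G (g j) (fun i => g i) = 𝔼 a, 𝔼 r, G a r := by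
  rw [← expect_product', univ_product_univ]
  exact Fintype.expect_equiv (Equiv.funSplitAt j κ) _ _ fun _ => rfl

lemma expect_pi_apply [Nonempty κ] (j : J) (h : κ → M) : 𝔼 g : J → κ, h (g j) = 𝔼 i, h i := by
  rw [expect_pi_split j fun a _ => h a]
  simp only [Fintype.expect_const]

lemma expect_pi_mul_eq_zero {h : κ → ℝ} (h0 : 𝔼 i, h i = 0) {j j' : J} (hj : j' ≠ j) :
    𝔼 g : J → κ, h (g j) * h (g j') = 0 := by
  rw [expect_pi_split j fun a r => h a * h (r ⟨j', hj⟩)]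
  simp only [← mul_expect, ← expect_mul, h0, zero_mul]

lemma expect_pi_sq_expect [Nonempty κ] {h : κ → ℝ} (h0 : 𝔼 i, h i = 0) :
    𝔼 g : J → κ, (𝔼 j, h (g j)) ^ 2 = (𝔼 i, h i ^ 2) / Fintype.card J := by
  have hdiag (j : J) : ∑ j', 𝔼 g : J → κ, h (g j) * h (g j') = 𝔼 i, h i ^ 2 := by
    rw [sum_eq_single j (fun _ _ hj => expect_pi_mul_eq_zero h0 hj) (by simp)]
    simp only [← sq]
    exact expect_pi_apply j fun i => h i ^ 2
  simp only [sq, expect_mul_expect]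
  rw [expect_comm]
  simp only [expect_comm (s := (univ : Finset (J → κ)))]
  rcases isEmpty_or_nonempty J with _ | _
  · simp
  simp only [Fintype.expect_eq_sum_div_card (ι := J), ← sum_div, hdiag, sum_const, card_univ,
    nsmul_eq_mul]
  field_simp

end ProductAverages

lemma sq_sum_eq_sum_sq {α : Type*} [Fintype α] {y : α → ℝ}
    (hy : ∀ i j, y i ≠ 0 → y j ≠ 0 → i = j) : (∑ i, y i) ^ 2 = ∑ i, y i ^ 2 := by
  rw [sq, sum_mul_sum]
  refine sum_congr rfl fun i _ => ?_
  rw [sum_eq_single i (fun j _ hj => ?_) (by simp), sq]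
  by_contra hne
  exact hj (hy j i (right_ne_zero_of_mul hne) (left_ne_zero_of_mul hne))

lemma exists_lt_of_affine_step {S : Set ℝ} (hne : S.Nonempty) (hbdd : BddBelow S) {a q r : ℝ}
    (hq0 : 0 < q) (hq1 : q < 1) (hstep : ∀ K ∈ S, a + q * K ∈ S) (hr : a < (1 - q) * r) :
    ∃ K ∈ S, K < r := by
  refine exists_lt_of_csInf_lt hne ?_
  have hle : (sInf S - a) / q ≤ sInf S := le_csInf hne fun K hK => by
    rw [div_le_iff₀ hq0]
    linarith [csInf_le hbdd (hstep K hK)]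
  rw [div_le_iff₀ hq0] at hle
  nlinarith

section Concentrator

/-- The permutations mapping `A` into `U`. -/
def permsInto {V : Type*} [Fintype V] [DecidableEq V] (A U : Finset V) : Finset (Equiv.Perm V) :=
  {σ | ∀ i ∈ A, σ i ∈ U}

section PermsInto

variable {V : Type*} [Fintype V] [DecidableEq V] {A U : Finset V}

lemma mem_permsInto {σ : Equiv.Perm V} : σ ∈ permsInto A U ↔ ∀ i ∈ A, σ i ∈ U := by
  simp [permsInto]

lemma mul_swap_mem_permsInto {a b : V} (ha : a ∉ A) (hb : b ∉ A) {σ : Equiv.Perm V}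
    (hσ : σ ∈ permsInto (insert a A) U) : σ * Equiv.swap a b ∈ permsInto (insert b A) U := by
  simp only [mem_permsInto, forall_mem_insert, Equiv.Perm.mul_apply, Equiv.swap_apply_right]
    at hσ ⊢
  refine ⟨hσ.1, fun i hi => ?_⟩
  rw [Equiv.swap_apply_of_ne_of_ne (ne_of_mem_of_not_mem hi ha) (ne_of_mem_of_not_mem hi hb)]
  exact hσ.2 i hi

lemma card_permsInto_insert_congr {a b : V} (ha : a ∉ A) (hb : b ∉ A) :
    #(permsInto (insert a A) U) = #(permsInto (insert b A) U) :=
  card_bij' (fun σ _ => σ * Equiv.swap a b) (fun σ _ => σ * Equiv.swap b a)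
    (fun _ hσ => mul_swap_mem_permsInto ha hb hσ) (fun _ hσ => mul_swap_mem_permsInto hb ha hσ)
    (fun σ _ => by simp [mul_assoc, Equiv.swap_comm b a])
    (fun σ _ => by simp [mul_assoc, Equiv.swap_comm b a])

lemma card_compl_filter_add_card {σ : Equiv.Perm V} (hσ : σ ∈ permsInto A U) :
    #{b ∈ Aᶜ | σ b ∈ U} + #A = #U := by
  have hA : {b ∈ A | σ b ∈ U} = A := filter_true_of_mem (mem_permsInto.mp hσ)
  have hU : #{b | σ b ∈ U} = #U := by
    rw [← card_map σ.toEmbedding]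
    congr 1
    ext b
    simp
  rw [← hU, ← union_compl A, filter_union, card_union_of_disjoint, hA, add_comm]
  exact disjoint_filter_filter disjoint_compl_right

lemma filter_permsInto (b : V) : {σ ∈ permsInto A U | σ b ∈ U} = permsInto (insert b A) U := by
  ext σ
  simp [mem_permsInto, and_comm]

lemma card_permsInto_insert {a : V} (ha : a ∉ A) :
    #Aᶜ * #(permsInto (insert a A) U) + #(permsInto A U) * #A = #(permsInto A U) * #U := by
  have hcount : #Aᶜ * #(permsInto (insert a A) U) = ∑ σ ∈ permsInto A U, #{b ∈ Aᶜ | σ b ∈ U} := by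
    have hswap := sum_card_bipartiteAbove_eq_sum_card_bipartiteBelow (s := Aᶜ)
      (t := permsInto A U) fun b σ => σ b ∈ U
    simp only [bipartiteAbove, bipartiteBelow, filter_permsInto] at hswap
    rw [← hswap, sum_const_nat fun b hb => card_permsInto_insert_congr (mem_compl.mp hb) ha]
  rw [hcount, ← smul_eq_mul, ← sum_const, ← sum_add_distrib]
  exact sum_const_nat fun σ hσ => card_compl_filter_add_card hσ

lemma card_permsInto_insert_mul_le {a : V} (ha : a ∉ A) :
    #(permsInto (insert a A) U) * Fintype.card V ≤ #(permsInto A U) * #U := by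
  have hcount := card_permsInto_insert (U := U) ha
  have hle : #(permsInto (insert a A) U) ≤ #(permsInto A U) :=
    card_le_card (filter_permsInto a ▸ filter_subset _ _)
  rw [← card_compl_add_card A]
  nlinarith

lemma card_permsInto_le [Nonempty V] (A U : Finset V) :
    (#(permsInto A U) : ℝ) ≤ Fintype.card (Equiv.Perm V) * (#U / Fintype.card V) ^ #A := by
  induction A using Finset.induction_on with
  | empty => simpa using card_le_univ (permsInto ∅ U)
  | insert a A ha ih =>
    have hV : (0 : ℝ) < Fintype.card V := by exact_mod_cast Fintype.card_pos
    calc (#(permsInto (insert a A) U) : ℝ)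
        ≤ #(permsInto A U) * (#U / Fintype.card V) := by
          rw [← mul_div_assoc, le_div_iff₀ hV]
          exact_mod_cast card_permsInto_insert_mul_le ha
      _ ≤ Fintype.card (Equiv.Perm V) * (#U / Fintype.card V) ^ #A * (#U / Fintype.card V) := by
          gcongr
      _ = _ := by rw [card_insert_of_notMem ha, pow_succ, mul_assoc]

end PermsInto

lemma choose_mul_pow_le (N s : ℕ) : (N.choose s : ℝ) * s ^ s ≤ (3 * N) ^ s := by
  have hexp : (s : ℝ) ^ s / s.factorial ≤ 3 ^ s := calc
    _ ≤ Real.exp s := Real.pow_div_factorial_le_exp _ s.cast_nonneg s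
    _ = Real.exp 1 ^ s := by rw [← Real.exp_nat_mul, mul_one]
    _ ≤ 3 ^ s := by gcongr; linarith [Real.exp_one_lt_d9]
  calc (N.choose s : ℝ) * s ^ s ≤ N ^ s / s.factorial * s ^ s := by
        gcongr
        exact Nat.choose_le_pow_div s N
    _ = N ^ s * (s ^ s / s.factorial) := by ring
    _ ≤ N ^ s * 3 ^ s := by gcongr
    _ = (3 * N) ^ s := by ring

lemma choose_mul_choose_mul_pow_le {R s : ℕ} (hs : 128 * s ≤ R) :
    ((R * 64).choose s * R.choose s : ℝ) * ((s / R : ℝ) ^ s) ^ 4 ≤ (1 / 16) ^ s := by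
  rcases Nat.eq_zero_or_pos s with rfl | hs0
  · simp
  have hR : (0 : ℝ) < R := by exact_mod_cast (by omega : 0 < R)
  have hsR : (s / R : ℝ) ≤ 1 / 128 := by
    rw [div_le_iff₀ hR]
    have : (128 : ℝ) * s ≤ R := by exact_mod_cast hs
    linarith
  have h₁ := choose_mul_pow_le (R * 64) s
  have h₂ := choose_mul_pow_le R s
  push_cast at h₁
  calc ((R * 64).choose s * R.choose s : ℝ) * ((s / R : ℝ) ^ s) ^ 4
      = ((R * 64).choose s * (s : ℝ) ^ s) * (R.choose s * (s : ℝ) ^ s) / ((R : ℝ) ^ s) ^ 2 *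
          ((s / R : ℝ) ^ s) ^ 2 := by
        rw [div_pow]
        field_simp
    _ ≤ (3 * (R * 64) : ℝ) ^ s * (3 * R : ℝ) ^ s / ((R : ℝ) ^ s) ^ 2 *
          ((1 / 128 : ℝ) ^ s) ^ 2 := by
        gcongr
    _ = (9 / 256 : ℝ) ^ s := by
        rw [← mul_pow, pow_right_comm _ s, pow_right_comm _ s, ← div_pow, ← mul_pow]
        congr 1
        field_simp
        norm_num
    _ ≤ (1 / 16) ^ s := pow_le_pow_left₀ (by norm_num) (by norm_num) s

variable {κ : Type*} [Fintype κ] [DecidableEq κ]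

/-- The quadruples of permutations of `κ × Fin 64` for which some `s` points have all their images
lying over only `s` points of `κ`: they violate Hall's condition, up to one unit, at size `s`. -/
def congestedPerms (κ : Type*) [Fintype κ] [DecidableEq κ] (s : ℕ) :
    Finset (Fin 4 → Equiv.Perm (κ × Fin 64)) :=
  (powersetCard s univ ×ˢ powersetCard s univ).biUnion fun q : Finset (κ × Fin 64) × Finset κ =>
    Fintype.piFinset fun _ => permsInto q.1 (q.2 ×ˢ univ)

lemma mem_congestedPerms {s : ℕ} {π : Fin 4 → Equiv.Perm (κ × Fin 64)} :
    π ∈ congestedPerms κ s ↔ ∃ (A : Finset (κ × Fin 64)) (T : Finset κ),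
      #A = s ∧ #T = s ∧ ∀ a, ∀ v ∈ A, (π a v).1 ∈ T := by
  simp [congestedPerms, mem_permsInto]

lemma card_congestedPerms_le [Nonempty κ] {s : ℕ} (hs : 128 * s ≤ Fintype.card κ) :
    (#(congestedPerms κ s) : ℝ) ≤
      Fintype.card (Fin 4 → Equiv.Perm (κ × Fin 64)) * (1 / 16) ^ s := by
  set R := Fintype.card κ with hRdef
  set P := Fintype.card (Equiv.Perm (κ × Fin 64)) with hP
  have hperms (q) (hq : q ∈ powersetCard s (univ : Finset (κ × Fin 64)) ×ˢ
      powersetCard s (univ : Finset κ)) :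
      (#(Fintype.piFinset fun _ : Fin 4 => permsInto q.1 (q.2 ×ˢ univ)) : ℝ) ≤
        (P * (s / R : ℝ) ^ s) ^ 4 := by
    rw [mem_product, mem_powersetCard_univ, mem_powersetCard_univ] at hq
    have hcard := card_permsInto_le q.1 (q.2 ×ˢ (univ : Finset (Fin 64)))
    rw [card_product, Fintype.card_prod, hq.1, hq.2, card_univ, ← hRdef, ← hP, Nat.cast_mul,
      Nat.cast_mul, mul_div_mul_right _ _ (by simp)] at hcard
    rw [Fintype.card_piFinset_const, Nat.cast_pow]
    gcongr
  calc (#(congestedPerms κ s) : ℝ)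
      ≤ ((R * 64).choose s * R.choose s : ℝ) * (P * (s / R : ℝ) ^ s) ^ 4 := by
        refine (Nat.cast_le.mpr card_biUnion_le).trans ?_
        rw [Nat.cast_sum]
        refine (sum_le_card_nsmul _ _ _ hperms).trans_eq ?_
        simp [← hRdef]
    _ = (P : ℝ) ^ 4 * (((R * 64).choose s * R.choose s : ℝ) * ((s / R : ℝ) ^ s) ^ 4) := by ring
    _ ≤ (P : ℝ) ^ 4 * (1 / 16) ^ s := by gcongr; exact choose_mul_choose_mul_pow_le hs
    _ = _ := by simp [hP]

lemma exists_forall_notMem_congestedPerms [Nonempty κ] :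
    ∃ π, ∀ s, 1 ≤ s → 128 * s ≤ Fintype.card κ → π ∉ congestedPerms κ s := by
  set N := Fintype.card (Fin 4 → Equiv.Perm (κ × Fin 64)) with hN
  have hNpos : (0 : ℝ) < N := by exact_mod_cast Fintype.card_pos
  set m := Fintype.card κ / 128
  have hcard : (#((Ico 1 (m + 1)).biUnion (congestedPerms κ)) : ℝ) < N := calc
    _ ≤ ∑ s ∈ Ico 1 (m + 1), (#(congestedPerms κ s) : ℝ) := by exact_mod_cast card_biUnion_le
    _ ≤ ∑ s ∈ Ico 1 (m + 1), N * (1 / 16 : ℝ) ^ s :=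
        sum_le_sum fun s hs => card_congestedPerms_le (by rw [mem_Ico] at hs; omega)
    _ ≤ N * ((1 / 16) ^ 1 / (1 - 1 / 16)) := by
        rw [← mul_sum]
        gcongr
        exact geom_sum_Ico_le_of_lt_one (by norm_num) (by norm_num)
    _ < N := by linarith
  obtain ⟨π, hπ⟩ : ∃ π, π ∉ (Ico 1 (m + 1)).biUnion (congestedPerms κ) := by
    by_contra! h
    rw [eq_univ_of_forall h, card_univ, ← hN] at hcard
    exact lt_irrefl _ hcard
  refine ⟨π, fun s hs1 hs hπs => hπ (mem_biUnion.mpr ⟨s, ?_, hπs⟩)⟩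
  rw [mem_Ico]
  omega

lemma exists_concentrator (κ : Type*) [Fintype κ] [Nonempty κ] :
    ∃ π : Fin 4 → Equiv.Perm (κ × Fin 64), ∀ A : Finset (κ × Fin 64), 128 * #A ≤ Fintype.card κ →
      ∃ a : κ × Fin 64 → Fin 4, Set.InjOn (fun v => (π (a v) v).1) A := by
  classical
  obtain ⟨π, hπ⟩ := exists_forall_notMem_congestedPerms (κ := κ)
  refine ⟨π, fun A hA => ?_⟩
  let nbr (v : A) : Finset κ := univ.image fun a => (π a v).1
  have hhall (s : Finset A) : #s ≤ #(s.biUnion nbr) := by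
    by_contra! hlt
    have hsA : #s ≤ #A := by simpa using card_le_univ s
    obtain ⟨T, hT, hTs⟩ := exists_superset_card_eq hlt.le (by omega : #s ≤ Fintype.card κ)
    refine hπ #s (by omega) (by omega) (mem_congestedPerms.mpr
      ⟨s.map (.subtype _), T, card_map _, hTs, fun a v hv => ?_⟩)
    obtain ⟨w, hw, rfl⟩ := mem_map.mp hv
    exact hT (mem_biUnion.mpr ⟨w, hw, mem_image_of_mem _ (mem_univ a)⟩)
  obtain ⟨g, hg, hgn⟩ := (all_card_le_biUnion_card_iff_exists_injective nbr).mp hhall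
  choose a _ ha using fun v => mem_image.mp (hgn v)
  refine ⟨fun v => if hv : v ∈ A then a ⟨v, hv⟩ else 0, fun v hv w hw hvw => ?_⟩
  rw [mem_coe] at hv hw
  simp only [hv, hw, dif_pos, ha] at hvw
  exact congrArg Subtype.val (hg hvw)

end Concentrator

section TwoConvex

/-- A 2-convex unconditional body: solid for the coordinatewise order, with the squares of its
points forming a convex set. The unit ball of `ℓ_p` is of this kind for `2 ≤ p ≤ ∞`. -/
structure IsTwoConvex {ι : Type*} (B : Set (ι → ℝ)) : Prop where
  zero_mem : 0 ∈ B
  isSolid : LatticeOrderedAddCommGroup.IsSolid B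
  convex_sq : Convex ℝ ((fun x => x ^ 2) '' B)

namespace IsTwoConvex

variable {ι : Type*} {B : Set (ι → ℝ)}

lemma mem_of_sq_le (hB : IsTwoConvex B) {x y : ι → ℝ} (hy : y ∈ (fun x => x ^ 2) '' B)
    (h : x ^ 2 ≤ y) : x ∈ B := by
  obtain ⟨w, hw, rfl⟩ := hy
  exact hB.isSolid hw fun c => sq_le_sq.mp (h c)

lemma neg_mem (hB : IsTwoConvex B) {x : ι → ℝ} (hx : x ∈ B) : -x ∈ B :=
  hB.isSolid hx (abs_neg x).le

lemma mem_of_sq_le_expect (hB : IsTwoConvex B) {α : Type*} {s : Finset α} (hs : s.Nonempty)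
    {x : α → ι → ℝ} (hx : ∀ i ∈ s, x i ∈ B) {z : ι → ℝ}
    (hz : ∀ c, z c ^ 2 ≤ 𝔼 i ∈ s, x i c ^ 2) : z ∈ B := by
  refine hB.mem_of_sq_le
    (convex_expect_mem hB.convex_sq hs fun i hi => Set.mem_image_of_mem _ (hx i hi)) fun c => ?_
  simpa only [expect_apply, Pi.pow_apply] using hz c

lemma convex (hB : IsTwoConvex B) : Convex ℝ B := fun x hx y hy a b ha hb hab => by
  refine hB.mem_of_sq_le (hB.convex_sq (Set.mem_image_of_mem _ hx) (Set.mem_image_of_mem _ hy)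
    ha hb hab) fun c => ?_
  simpa using (even_two.convexOn_pow (𝕜 := ℝ)).2 (Set.mem_univ (x c)) (Set.mem_univ (y c)) ha hb hab

end IsTwoConvex

end TwoConvex

section NearlyAffine

variable {E : Type*} [AddCommGroup E] [Module ℝ E] {B : Set E} {f : E → ℝ}

lemma abs_add_sub_two_mul_map_midpoint_le (hB : Convex ℝ B) {δ : ℝ} (h : diffBound 2 B f δ)
    {x y : E} (hx : x ∈ B) (hy : y ∈ B) : |f x + f y - 2 * f (midpoint ℝ x y)| ≤ δ := by
  have hmid : x + (1 / 2 : ℝ) • (y - x) = midpoint ℝ x y := by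
    rw [midpoint_eq_smul_add, invOf_eq_inv]
    module
  have hend : x + (2 : ℝ) • (1 / 2 : ℝ) • (y - x) = y := by module
  have hmem (j : ℕ) (hj : j ≤ 2) : x + (j : ℝ) • (1 / 2 : ℝ) • (y - x) ∈ B := by
    interval_cases j
    · simpa using hx
    · simpa only [Nat.cast_one, one_smul, hmid] using hB.midpoint_mem hx hy
    · simpa only [Nat.cast_ofNat, hend] using hy
  convert h x ((1 / 2 : ℝ) • (y - x)) hmem using 2
  simp only [sum_range_succ, range_zero, sum_empty, Nat.cast_zero, Nat.cast_one, Nat.cast_ofNat,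
    zero_smul, one_smul, add_zero, hmid, hend, Nat.choose_zero_right, Nat.choose_self,
    Nat.choose_one_right]
  ring

/-- `f` is midpoint-affine on `B` up to an error `1`, vanishes at the origin and is bounded
by `K`: the normalized class inside which the bound `K` is improved. -/
structure NearlyAffineOn (f : E → ℝ) (B : Set E) (K : ℝ) : Prop where
  midpoint_le : ∀ x ∈ B, ∀ y ∈ B, |f x + f y - 2 * f (midpoint ℝ x y)| ≤ 1
  map_zero : f 0 = 0
  bound : ∀ x ∈ B, |f x| ≤ K

namespace NearlyAffineOn

variable {K : ℝ}

lemma abs_expect_sub_map_expect_le [Module ℚ≥0 E] (H : NearlyAffineOn f B K) (hB : Convex ℝ B)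
    {α : Type*} {s : Finset α} {x : α → E} (hx : ∀ i ∈ s, x i ∈ B) {k : ℕ} (hs : #s = 2 ^ k) :
    |𝔼 i ∈ s, f (x i) - f (𝔼 i ∈ s, x i)| ≤ k / 2 := by
  classical
  induction k generalizing s with
  | zero =>
    obtain ⟨i, rfl⟩ := card_eq_one.mp hs
    simp
  | succ k ih =>
    obtain ⟨t, hts, ht⟩ := exists_subset_card_eq (by omega : 2 ^ k ≤ #s)
    have hst : #(s \ t) = 2 ^ k := by
      have := card_sdiff_add_card_eq_card hts
      omega
    have hxt (i) (hi : i ∈ t) : x i ∈ B := hx i (hts hi)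
    have hxst (i) (hi : i ∈ s \ t) : x i ∈ B := hx i (sdiff_subset hi)
    have hmid := H.midpoint_le _
      (convex_expect_mem hB (card_pos.mp (by simp [hst])) hxst) _
      (convex_expect_mem hB (card_pos.mp (by simp [ht])) hxt)
    rw [expect_eq_midpoint hts (hst.trans ht.symm), expect_eq_midpoint hts (hst.trans ht.symm),
      midpoint_eq_smul_add ℝ (𝔼 i ∈ s \ t, f (x i)), invOf_eq_inv, smul_eq_mul]
    have ht' := abs_le.mp (ih hxt ht)
    have hst' := abs_le.mp (ih hxst hst)
    rw [abs_le] at hmid ⊢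
    push_cast
    constructor <;> linarith

lemma abs_map_smul_sub_le (H : NearlyAffineOn f B K) (hB : Convex ℝ B) (h0 : 0 ∈ B) {x : E}
    (hx : x ∈ B) {t : ℝ} (ht : t ∈ Set.Icc (0 : ℝ) 1) : |f (t • x) - t * f x| ≤ 1 := by
  have hmem {u : ℝ} (hu : u ∈ Set.Icc (0 : ℝ) 1) : u • x ∈ B := hB.smul_mem_of_zero_mem h0 hx hu
  have hK : 0 ≤ K := (abs_nonneg _).trans (H.bound 0 h0)
  let S : Set ℝ := {D | ∀ u ∈ Set.Icc (0 : ℝ) 1, |f (u • x) - u * f x| ≤ D}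
  have hne : 2 * K ∈ S := fun u hu => by
    have hux := abs_le.mp (H.bound _ (hmem hu))
    have hfx := abs_le.mp (H.bound _ hx)
    rw [abs_le]
    constructor <;> nlinarith [hu.1, hu.2]
  have hbdd : BddBelow S := ⟨0, fun D hD => (abs_nonneg _).trans (hD 0 (by simp))⟩
  have hstep (D : ℝ) (hD : D ∈ S) : 1 / 2 + 1 / 2 * D ∈ S := fun u ⟨hu0, hu1⟩ => by
    rcases le_total u (1 / 2) with hu | hu
    · have hu' : 2 * u ∈ Set.Icc (0 : ℝ) 1 := ⟨by linarith, by linarith⟩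
      have hmid := H.midpoint_le _ (hmem hu') 0 h0
      rw [midpoint_eq_smul_add, invOf_eq_inv, add_zero, smul_smul, inv_mul_cancel_left₀ two_ne_zero,
        H.map_zero] at hmid
      have hDu := hD _ hu'
      rw [abs_le] at hmid hDu ⊢
      constructor <;> linarith
    · have hu' : 2 * u - 1 ∈ Set.Icc (0 : ℝ) 1 := ⟨by linarith, by linarith⟩
      have hmid := H.midpoint_le _ (hmem hu') x hx
      have hux : midpoint ℝ ((2 * u - 1) • x) x = u • x := by
        rw [midpoint_eq_smul_add, invOf_eq_inv]
        module
      have hDu := hD _ hu'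
      rw [hux] at hmid
      rw [abs_le] at hmid hDu ⊢
      constructor <;> linarith
  refine le_of_forall_gt fun r hr => ?_
  obtain ⟨D, hD, hDr⟩ := exists_lt_of_affine_step ⟨_, hne⟩ hbdd (by norm_num) (by norm_num) hstep
    (by linarith : 1 / 2 < (1 - 1 / 2) * r)
  exact (hD t ht).trans_lt hDr

lemma abs_map_le_of_smul_mem (H : NearlyAffineOn f B K) (hB : Convex ℝ B) (h0 : 0 ∈ B) {a : ℝ}
    (ha : 1 ≤ a) {x : E} (hx : a • x ∈ B) : |f x| ≤ 1 + K / a := by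
  have ha0 : 0 < a := by linarith
  have hhom := H.abs_map_smul_sub_le hB h0 hx ⟨inv_nonneg.mpr ha0.le, inv_le_one_of_one_le₀ ha⟩
  rw [inv_smul_smul₀ ha0.ne', inv_mul_eq_div] at hhom
  have hKa : |f (a • x) / a| ≤ K / a := by
    rw [abs_div, abs_of_pos ha0]
    exact div_le_div_of_nonneg_right (H.bound _ hx) ha0.le
  linarith [abs_sub_abs_le_abs_sub (f x) (f (a • x) / a)]

lemma abs_expect_sub_map_sum_div_le [Module ℚ≥0 E] (H : NearlyAffineOn f B K) (hB : Convex ℝ B)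
    (h0 : 0 ∈ B) {Q : Type*} [Fintype Q] {X : Q → E} (hX : ∀ q, X q ∈ B) (hsum : ∑ q, X q ∈ B)
    {k : ℕ} (hQ : Fintype.card Q = 2 ^ k) :
    |𝔼 q, f (X q) - f (∑ q, X q) / 2 ^ k| ≤ k / 2 + 1 := by
  have havg := H.abs_expect_sub_map_expect_le hB (fun q _ => hX q) (card_univ.trans hQ)
  have hhom := H.abs_map_smul_sub_le hB h0 hsum (t := (2 ^ k)⁻¹)
    ⟨by positivity, inv_le_one_of_one_le₀ (one_le_pow₀ one_le_two)⟩
  rw [expect_eq_inv_card_smul_sum univ X, card_univ, hQ, Nat.cast_pow, Nat.cast_ofNat] at havg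
  rw [inv_mul_eq_div] at hhom
  exact (abs_sub_le _ _ _).trans (add_le_add havg hhom)

end NearlyAffineOn

end NearlyAffine

section DisjointSupports

variable {ι : Type*} {B : Set (ι → ℝ)} {f : (ι → ℝ) → ℝ} {K : ℝ}

lemma IsTwoConvex.two_pow_smul_expect_mem (hB : IsTwoConvex B) {Q : Type*} [Fintype Q] {m : ℕ}
    (hQ : Fintype.card Q = 4 ^ m) {Y : Q → ι → ℝ} (hY : ∀ q, Y q ∈ B)
    (hdisj : ∀ c q q', Y q c ≠ 0 → Y q' c ≠ 0 → q = q') : (2 ^ m : ℝ) • 𝔼 q, Y q ∈ B := by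
  have hne : (univ : Finset Q).Nonempty := card_pos.mp (by simp [hQ])
  refine hB.mem_of_sq_le_expect hne (fun q _ => hY q) fun c => le_of_eq ?_
  have h4 : (2 ^ m : ℝ) ^ 2 = 4 ^ m := by
    rw [← pow_mul, mul_comm, pow_mul]
    norm_num
  simp only [Pi.smul_apply, expect_apply, smul_eq_mul, Fintype.expect_eq_sum_div_card, hQ,
    Nat.cast_pow, Nat.cast_ofNat, mul_pow, div_pow, sq_sum_eq_sum_sq (hdisj c), h4]
  field_simp

lemma NearlyAffineOn.abs_expect_le_of_disjoint (H : NearlyAffineOn f B K) (hB : IsTwoConvex B)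
    {Q : Type*} [Fintype Q] {m : ℕ} (hQ : Fintype.card Q = 4 ^ m) {Y : Q → ι → ℝ}
    (hY : ∀ q, Y q ∈ B) (hdisj : ∀ c q q', Y q c ≠ 0 → Y q' c ≠ 0 → q = q') :
    |𝔼 q, f (Y q)| ≤ m + 1 + K / 2 ^ m := by
  have hcard : Fintype.card Q = 2 ^ (2 * m) := by
    rw [hQ, pow_mul]
    rfl
  have havg := H.abs_expect_sub_map_expect_le hB.convex (fun q _ => hY q) (card_univ.trans hcard)
  have hsmall := H.abs_map_le_of_smul_mem hB.convex hB.zero_mem (one_le_pow₀ one_le_two)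
    (hB.two_pow_smul_expect_mem hQ hY hdisj)
  push_cast at havg
  linarith [abs_sub_abs_le_abs_sub (𝔼 q, f (Y q)) (f (𝔼 q, Y q))]

end DisjointSupports

section Sparse

variable {κ ι : Type*} [Fintype κ] [Nonempty κ]

lemma exists_disjoint_regrouping {z : κ → ι → ℝ}
    (hz : ∀ c, 8192 * #{i | z i c ≠ 0} ≤ Fintype.card κ) :
    ∃ (π : Fin 4 → Equiv.Perm (κ × Fin 64)) (X : κ × Fin 64 → Fin 4 → ι → ℝ),
      (∀ v a, |X v a| ≤ |z v.1|) ∧ (∀ v, ∑ a, X v a = z v.1) ∧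
      ∀ j c (q q' : Fin 4 × Fin 64), X ((π q.1).symm (j, q.2)) q.1 c ≠ 0 →
        X ((π q'.1).symm (j, q'.2)) q'.1 c ≠ 0 → q = q' := by
  classical
  obtain ⟨π, hπ⟩ := exists_concentrator κ
  let A (c : ι) : Finset (κ × Fin 64) := ({i | z i c ≠ 0} : Finset κ) ×ˢ univ
  have hA (c : ι) : 128 * #(A c) ≤ Fintype.card κ := by
    rw [card_product, card_univ, Fintype.card_fin]
    linarith [hz c]
  choose sel hsel using fun c => hπ (A c) (hA c)
  refine ⟨π, fun v a c => if sel c v = a then z v.1 c else 0, fun v a c => ?_, fun v => ?_,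
    fun j c q q' hq hq' => ?_⟩
  · simp only [Pi.abs_apply]
    split_ifs <;> simp
  · ext c
    simp
  · obtain ⟨hselq, hzq⟩ := ite_ne_right_iff.mp hq
    obtain ⟨hselq', hzq'⟩ := ite_ne_right_iff.mp hq'
    have hv : (π q.1).symm (j, q.2) = (π q'.1).symm (j, q'.2) := by
      refine hsel c (by simp [A, hzq]) (by simp [A, hzq']) ?_
      simp only [hselq, hselq', Equiv.apply_symm_apply]
    have h₁ : q.1 = q'.1 := by rw [← hselq, ← hselq', hv]
    rw [h₁] at hv
    exact Prod.ext h₁ (Prod.ext_iff.mp ((π q'.1).symm.injective hv)).2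

lemma expect_regroup {V L J T : Type*} [Fintype V] [Fintype L] [Fintype J] [Fintype T]
    (π : L → V ≃ J × T) (g : V → L → ℝ) :
    𝔼 j, 𝔼 q : L × T, g ((π q.1).symm (j, q.2)) q.1 = 𝔼 v, 𝔼 a, g v a := by
  have hπ (a : L) : 𝔼 j, 𝔼 t, g ((π a).symm (j, t)) a = 𝔼 v, g v a := by
    rw [← expect_product', univ_product_univ]
    exact Fintype.expect_equiv (π a).symm _ _ fun _ => rfl
  simp_rw [← univ_product_univ, expect_product]
  rw [expect_comm]
  simp only [hπ]
  exact expect_comm _ _ _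

lemma NearlyAffineOn.abs_expect_le_of_sparse {B : Set (ι → ℝ)} {f : (ι → ℝ) → ℝ} {K : ℝ}
    (H : NearlyAffineOn f B K) (hB : IsTwoConvex B) {z : κ → ι → ℝ} (hzB : ∀ i, z i ∈ B)
    (hz : ∀ c, 8192 * #{i | z i c ≠ 0} ≤ Fintype.card κ) : |𝔼 i, f (z i)| ≤ 28 + K / 4 := by
  obtain ⟨π, X, hXz, hsum, hdisj⟩ := exists_disjoint_regrouping hz
  have hX (v a) : X v a ∈ B := hB.isSolid (hzB v.1) (hXz v a)
  have hrow : |𝔼 v, 𝔼 a, f (X v a)| ≤ 5 + K / 16 := by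
    rw [← expect_regroup π fun v a => f (X v a)]
    refine (abs_expect_le _ _).trans (expect_le univ_nonempty fun j _ => ?_)
    have := H.abs_expect_le_of_disjoint hB (Q := Fin 4 × Fin 64) (m := 4) (by simp)
      (fun q => hX _ q.1) (hdisj j)
    norm_num at this
    exact this
  have hcol : |𝔼 v, 𝔼 a, f (X v a) - 𝔼 v : κ × Fin 64, f (z v.1) / 4| ≤ 2 := by
    refine abs_expect_sub_expect_le univ_nonempty fun v _ => ?_
    have := H.abs_expect_sub_map_sum_div_le hB.convex hB.zero_mem (hX v)
      (by rw [hsum]; exact hzB v.1) (k := 2) (by simp)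
    rw [hsum] at this
    norm_num at this ⊢
    exact this
  have hfib : 𝔼 v : κ × Fin 64, f (z v.1) / 4 = (𝔼 i, f (z i)) / 4 := by
    rw [← univ_product_univ, expect_product]
    simp only [Fintype.expect_const, expect_div]
  rw [hfib] at hcol
  rw [abs_le] at hrow hcol ⊢
  constructor <;> linarith

end Sparse

section Barycentres

lemma card_filter_lt_abs_le {κ : Type*} [Fintype κ] {y : κ → ℝ} {σ : ℝ}
    (hσ : 𝔼 j, y j ^ 2 ≤ σ ^ 2 / 2 ^ 19) : 8192 * #{j | |σ| / 8 < |y j|} ≤ Fintype.card κ := by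
  rcases eq_or_ne σ 0 with rfl | hσ0
  · have hsq : 𝔼 j, y j ^ 2 = 0 :=
      le_antisymm (by simpa using hσ) (expect_nonneg fun j _ => sq_nonneg (y j))
    rw [Fintype.expect_eq_zero_iff_of_nonneg fun j => sq_nonneg (y j)] at hsq
    simp [fun j => sq_eq_zero_iff.mp (congrFun hsq j)]
  have hchebyshev :
      #{j | |σ| / 8 < |y j|} * (σ ^ 2 / 64) ≤ Fintype.card κ * (σ ^ 2 / 2 ^ 19) := calc
    #{j | |σ| / 8 < |y j|} * (σ ^ 2 / 64) = ∑ j with |σ| / 8 < |y j|, (|σ| / 8) ^ 2 := by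
        rw [sum_const, nsmul_eq_mul, div_pow, sq_abs]
        norm_num
    _ ≤ ∑ j with |σ| / 8 < |y j|, y j ^ 2 := sum_le_sum fun j hj => by
        rw [← sq_abs (y j)]
        gcongr
        exact (mem_filter.mp hj).2.le
    _ ≤ ∑ j, y j ^ 2 := sum_le_univ_sum_of_nonneg fun j => sq_nonneg (y j)
    _ = Fintype.card κ * 𝔼 j, y j ^ 2 := (Fintype.card_mul_expect _).symm
    _ ≤ Fintype.card κ * (σ ^ 2 / 2 ^ 19) := by gcongr
  have : (8192 * #{j | |σ| / 8 < |y j|} : ℝ) ≤ Fintype.card κ := by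
    refine le_of_mul_le_mul_right ?_ (by positivity : 0 < σ ^ 2 / 2 ^ 19)
    linarith
  exact_mod_cast this

/-- The vector `y` with its coordinates of size at most `|σ c| / 8` replaced by zero. -/
noncomputable def largePart {ι : Type*} (σ y : ι → ℝ) : ι → ℝ :=
  fun c => if |σ c| / 8 < |y c| then y c else 0

lemma abs_largePart_le {ι : Type*} (σ y : ι → ℝ) : |largePart σ y| ≤ |y| := fun c => by
  simp only [largePart, Pi.abs_apply]
  split_ifs <;> simp

namespace NearlyAffineOn

variable {ι : Type*} {B : Set (ι → ℝ)} {f : (ι → ℝ) → ℝ} {K : ℝ}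

lemma abs_map_add_sub_le {E : Type*} [AddCommGroup E] [Module ℝ E] {B : Set E} {f : E → ℝ}
    (H : NearlyAffineOn f B K) (h0 : 0 ∈ B) {x y : E} (hx : x ∈ B) (hy : y ∈ B)
    (hxy : x + y ∈ B) : |f x + f y - f (x + y)| ≤ 2 := by
  have hsum := H.midpoint_le x hx y hy
  have hzero := H.midpoint_le _ hxy 0 h0
  rw [midpoint_eq_smul_add, add_zero, ← midpoint_eq_smul_add, H.map_zero, add_zero] at hzero
  rw [abs_le] at hsum hzero ⊢
  constructor <;> linarith

lemma abs_map_sub_map_largePart_le (H : NearlyAffineOn f B K) (hB : IsTwoConvex B) {σ y : ι → ℝ}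
    (hσ : σ ∈ B) (hy : y ∈ B) : |f y - f (largePart σ y)| ≤ 3 + K / 8 := by
  have hsmall : (8 : ℝ) • (y - largePart σ y) ∈ B := hB.isSolid hσ fun c => by
    simp only [largePart, Pi.abs_apply, Pi.smul_apply, Pi.sub_apply, smul_eq_mul, abs_mul,
      Nat.abs_ofNat]
    split_ifs with hc
    · simp
    · rw [sub_zero]
      linarith
  have hsmallB : y - largePart σ y ∈ B := hB.isSolid hy fun c => by
    simp only [largePart, Pi.abs_apply, Pi.sub_apply]
    split_ifs <;> simp
  have hadd := H.abs_map_add_sub_le hB.zero_mem hsmallB (hB.isSolid hy (abs_largePart_le σ y))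
    (by rwa [sub_add_cancel])
  have hbound := H.abs_map_le_of_smul_mem hB.convex hB.zero_mem (by norm_num) hsmall
  rw [sub_add_cancel] at hadd
  rw [abs_le] at hadd hbound ⊢
  constructor <;> linarith

variable {κ : Type*} [Fintype κ] [Nonempty κ]

lemma abs_expect_le_of_variance_le (H : NearlyAffineOn f B K) (hB : IsTwoConvex B)
    {y : κ → ι → ℝ} (hy : ∀ j, y j ∈ B) {σ : ι → ℝ} (hσ : σ ∈ B)
    (hvar : ∀ c, 𝔼 j, y j c ^ 2 ≤ σ c ^ 2 / 2 ^ 19) : |𝔼 j, f (y j)| ≤ 31 + 3 / 8 * K := by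
  have hsparse (c : ι) : 8192 * #{j | largePart σ (y j) c ≠ 0} ≤ Fintype.card κ := by
    refine le_trans ?_ (card_filter_lt_abs_le (hvar c))
    gcongr with j
    exact fun hj => (ite_ne_right_iff.mp hj).1
  have hlarge := H.abs_expect_le_of_sparse hB
    (fun j => hB.isSolid (hy j) (abs_largePart_le σ (y j))) hsparse
  have hdiff := abs_expect_sub_expect_le (univ_nonempty (α := κ)) fun j _ =>
    H.abs_map_sub_map_largePart_le hB hσ (hy j)
  rw [abs_le] at hlarge hdiff ⊢
  constructor <;> linarith

lemma abs_expect_map_expect_comp_sub_le {E : Type*} [AddCommGroup E] [Module ℝ E] [Module ℚ≥0 E]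
    {B : Set E} {f : E → ℝ} (H : NearlyAffineOn f B K) (hB : Convex ℝ B) {x : κ → E}
    (hx : ∀ i, x i ∈ B) {J : Type*} [Fintype J] [DecidableEq J] {k : ℕ}
    (hJ : Fintype.card J = 2 ^ k) :
    |𝔼 g : J → κ, f (𝔼 j, x (g j)) - 𝔼 i, f (x i)| ≤ k / 2 := by
  have : Nonempty J := Fintype.card_pos_iff.mp (by simp [hJ])
  have hmarginal : 𝔼 g : J → κ, 𝔼 j, f (x (g j)) = 𝔼 i, f (x i) := by
    rw [expect_comm]
    simp only [expect_pi_apply _ fun i => f (x i), Fintype.expect_const]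
  rw [← hmarginal, abs_sub_comm]
  exact abs_expect_sub_expect_le univ_nonempty fun g _ =>
    H.abs_expect_sub_map_expect_le hB (fun j _ => hx (g j)) (card_univ.trans hJ)

lemma abs_expect_le_of_expect_eq_zero (H : NearlyAffineOn f B K) (hB : IsTwoConvex B)
    {x : κ → ι → ℝ} (hx : ∀ i, x i ∈ B) (hmean : 𝔼 i, x i = 0) :
    |𝔼 i, f (x i)| ≤ 81 / 2 + 3 / 8 * K := by
  -- `2 ^ 19 = 8 ^ 2 * 8192`: Chebyshev's inequality at `|σ| / 8`, exceptional density `1 / 8192`.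
  obtain ⟨J, _, _, hJ⟩ : ∃ (J : Type) (_ : Fintype J) (_ : DecidableEq J),
      Fintype.card J = 2 ^ 19 := ⟨Fin (2 ^ 19), _, inferInstance, Fintype.card_fin _⟩
  have : Nonempty J := Fintype.card_pos_iff.mp (hJ ▸ by positivity)
  let σ (c : ι) : ℝ := √(𝔼 i, x i c ^ 2)
  have hσ_sq (c : ι) : σ c ^ 2 = 𝔼 i, x i c ^ 2 :=
    Real.sq_sqrt (expect_nonneg fun i _ => sq_nonneg (x i c))
  have hσ : σ ∈ B := hB.mem_of_sq_le_expect univ_nonempty (fun i _ => hx i) fun c => (hσ_sq c).le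
  have hvar (c : ι) : 𝔼 g : J → κ, (𝔼 j, x (g j)) c ^ 2 ≤ σ c ^ 2 / 2 ^ 19 := by
    have hmean_c : 𝔼 i, x i c = 0 := by rw [← expect_apply, hmean, Pi.zero_apply]
    simp only [expect_apply]
    rw [expect_pi_sq_expect hmean_c, hσ_sq, hJ, Nat.cast_pow, Nat.cast_ofNat]
  have hsample := H.abs_expect_le_of_variance_le hB
    (fun g : J → κ => convex_expect_mem hB.convex univ_nonempty fun j _ => hx (g j)) hσ hvar
  have hcomp := H.abs_expect_map_expect_comp_sub_le hB.convex hx hJ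
  push_cast at hcomp
  rw [abs_le] at hsample hcomp ⊢
  constructor <;> linarith

lemma abs_expect_sub_map_barycentre_le (H : NearlyAffineOn f B K) (hB : IsTwoConvex B)
    {x : κ → ι → ℝ} (hx : ∀ i, x i ∈ B) :
    |𝔼 i, f (x i) - f (𝔼 i, x i)| ≤ 83 + 3 / 4 * K := by
  set b := 𝔼 i, x i with hb
  have hbB : b ∈ B := convex_expect_mem hB.convex univ_nonempty fun i _ => hx i
  have hmean : 𝔼 i, midpoint ℝ (x i) (-b) = 0 := by
    simp only [midpoint_eq_smul_add, ← smul_expect, expect_add_distrib, Fintype.expect_const,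
      ← hb, add_neg_cancel, smul_zero]
  have hcentred := H.abs_expect_le_of_expect_eq_zero hB
    (fun i => hB.convex.midpoint_mem (hx i) (hB.neg_mem hbB)) hmean
  have hmid := abs_expect_sub_expect_le (univ_nonempty (α := κ)) fun i _ =>
    H.midpoint_le _ (hx i) _ (hB.neg_mem hbB)
  have hanti := H.midpoint_le _ hbB _ (hB.neg_mem hbB)
  rw [midpoint_self_neg, H.map_zero] at hanti
  rw [expect_add_distrib, Fintype.expect_const, ← mul_expect] at hmid
  rw [abs_le] at hcentred hmid hanti ⊢
  constructor <;> linarith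

end NearlyAffineOn

end Barycentres

section Balls

lemma isTwoConvex_of_sqrt_mem {ι : Type*} {B : Set (ι → ℝ)} (h0 : 0 ∈ B)
    (hsolid : LatticeOrderedAddCommGroup.IsSolid B)
    (hsqrt : ∀ x ∈ B, ∀ y ∈ B, ∀ a b : ℝ, 0 ≤ a → 0 ≤ b → a + b = 1 →
      (fun i => √(a * x i ^ 2 + b * y i ^ 2)) ∈ B) : IsTwoConvex B where
  zero_mem := h0
  isSolid := hsolid
  convex_sq := by
    rintro _ ⟨x, hx, rfl⟩ _ ⟨y, hy, rfl⟩ a b ha hb hab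
    refine ⟨_, hsqrt x hx y hy a b ha hb hab, ?_⟩
    ext i
    exact Real.sq_sqrt (by positivity)

lemma isCompact_lInftyBall (n : ℕ) : IsCompact (lInftyBall n) := by
  have : lInftyBall n = Set.univ.pi fun _ => Set.Icc (-1) 1 := by
    ext x
    simp only [lInftyBall, Set.mem_ofPred_eq, abs_le, Set.mem_univ_pi, Set.mem_Icc]
  exact this ▸ isCompact_univ_pi fun _ => isCompact_Icc

lemma isTwoConvex_lInftyBall (n : ℕ) : IsTwoConvex (lInftyBall n) := by
  refine isTwoConvex_of_sqrt_mem (by simp [lInftyBall])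
    (fun x hx y hyx i => (hyx i).trans (hx i)) fun x hx y hy a b ha hb hab i => ?_
  rw [abs_of_nonneg (Real.sqrt_nonneg _), Real.sqrt_le_one]
  have hxi := (sq_le_one_iff_abs_le_one _).mpr (hx i)
  have hyi := (sq_le_one_iff_abs_le_one _).mpr (hy i)
  nlinarith

variable {n : ℕ} {p : ℝ}

lemma isCompact_lpBall (hp : 0 < p) : IsCompact (lpBall n p) := by
  refine (isCompact_lInftyBall n).of_isClosed_subset (isClosed_le ?_ continuous_const)
    fun x hx i => ?_
  · exact continuous_finsetSum _ fun i _ =>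
      ((continuous_apply i).abs).rpow_const fun _ => Or.inr hp.le
  · have hxi : |x i| ^ p ≤ 1 :=
      (single_le_sum (f := fun i => |x i| ^ p) (fun _ _ => by positivity) (mem_univ i)).trans hx
    exact le_of_not_gt fun h => hxi.not_gt (Real.one_lt_rpow h hp)

lemma isTwoConvex_lpBall (hp : 2 ≤ p) : IsTwoConvex (lpBall n p) := by
  have hp0 : 0 < p := by linarith
  refine isTwoConvex_of_sqrt_mem (by simp [lpBall, Real.zero_rpow hp0.ne'])
    (fun x hx y hyx => ?_) fun x hx y hy a b ha hb hab => ?_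
  · refine (sum_le_sum fun i _ => ?_).trans (Set.mem_ofPred_eq.mp hx)
    exact Real.rpow_le_rpow (abs_nonneg _) (hyx i) hp0.le
  have hpow (t : ℝ) : |t| ^ p = (t ^ 2) ^ (p / 2) := by
    rw [← sq_abs, ← Real.rpow_natCast_mul (abs_nonneg t)]
    congr 1
    push_cast
    ring
  calc ∑ i, |√(a * x i ^ 2 + b * y i ^ 2)| ^ p
      = ∑ i, (a * x i ^ 2 + b * y i ^ 2) ^ (p / 2) := sum_congr rfl fun i _ => by
        rw [hpow, Real.sq_sqrt (by positivity)]
    _ ≤ ∑ i, (a * |x i| ^ p + b * |y i| ^ p) := sum_le_sum fun i _ => by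
        rw [hpow, hpow]
        exact (convexOn_rpow (by linarith : 1 ≤ p / 2)).2 (sq_nonneg (x i)) (sq_nonneg (y i))
          ha hb hab
    _ = a * ∑ i, |x i| ^ p + b * ∑ i, |y i| ^ p := by
        rw [sum_add_distrib, mul_sum, mul_sum]
    _ ≤ a * 1 + b * 1 := by
        gcongr
        exacts [hx, hy]
    _ = 1 := by linarith

end Balls

section ConvexClosure

lemma convex_of_isClosed_of_midpoint_mem {E : Type*} [AddCommGroup E] [Module ℝ E]
    [TopologicalSpace E] [IsTopologicalAddGroup E] [ContinuousSMul ℝ E] {A : Set E}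
    (hA : IsClosed A) (hmid : ∀ x ∈ A, ∀ y ∈ A, midpoint ℝ x y ∈ A) : Convex ℝ A := by
  refine convex_iff_segment_subset.mpr fun x hx y hy => ?_
  rw [segment_eq_image_lineMap, Set.image_subset_iff]
  set T : Set ℝ := AffineMap.lineMap x y ⁻¹' A
  have hT : IsClosed T := hA.preimage AffineMap.lineMap_continuous
  have hT1 : (1 : ℝ) ∈ T := by simpa [T] using hy
  refine (hT.inter isClosed_Icc).Icc_subset_of_forall_exists_gt (by simpa [T] using hx)
    fun t ht u hu => ?_
  have htoward (n : ℕ) : t + (1 - t) * (1 / 2) ^ n ∈ T := by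
    induction n with
    | zero => simpa using hT1
    | succ n ih =>
      have hhalf : t + (1 - t) * (1 / 2) ^ (n + 1) = midpoint ℝ t (t + (1 - t) * (1 / 2) ^ n) := by
        rw [midpoint_eq_smul_add, invOf_eq_inv, smul_eq_mul]
        ring
      rw [hhalf, Set.mem_preimage, AffineMap.map_midpoint]
      exact hmid _ ht.1 _ ih
  have hpos : 0 < 1 - t := sub_pos.mpr ht.2.2
  obtain ⟨n, hn⟩ := exists_pow_lt_of_lt_one (div_pos (sub_pos.mpr hu) hpos)
    (by norm_num : (1 / 2 : ℝ) < 1)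
  rw [lt_div_iff₀ hpos] at hn
  exact ⟨_, htoward n, by simp [hpos], by linarith⟩

lemma expect_prod_bool_eq_midpoint {κ κ' M : Type*} [Fintype κ] [Fintype κ'] [Nonempty κ]
    [Nonempty κ'] [AddCommGroup M] [Module ℝ M] [Module ℚ≥0 M] (u : κ → M) (v : κ' → M) :
    𝔼 q : κ × κ' × Bool, (bif q.2.2 then u q.1 else v q.2.1) =
      midpoint ℝ (𝔼 i, u i) (𝔼 i, v i) := by
  have hbool (i : κ) (j : κ') : 𝔼 b, (bif b then u i else v j) = midpoint ℝ (u i) (v j) := by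
    simp [expect_eq_inv_card_smul_sum, midpoint_eq_smul_add]
  simp only [← univ_product_univ, expect_product, hbool, midpoint_eq_smul_add, ← smul_expect,
    expect_add_distrib, Fintype.expect_const]

/-- The means of finite families of points on the graph of `f` over `B`. Equal weights suffice,
since repetitions are allowed and only the closure of this set is used. -/
def graphMeans {E : Type*} [AddCommMonoid E] [Module ℚ≥0 E] (f : E → ℝ) (B : Set E) : Set (E × ℝ) :=
  {P | ∃ (κ : Type) (_ : Fintype κ) (_ : Nonempty κ) (x : κ → E), (∀ i, x i ∈ B) ∧
    𝔼 i, x i = P.1 ∧ 𝔼 i, f (x i) = P.2}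

lemma mk_mem_graphMeans {E : Type*} [AddCommMonoid E] [Module ℚ≥0 E] {f : E → ℝ} {B : Set E}
    {x : E} (hx : x ∈ B) : (x, f x) ∈ graphMeans f B :=
  ⟨Unit, inferInstance, inferInstance, fun _ => x, fun _ => hx, Fintype.expect_const _,
    Fintype.expect_const _⟩

variable {E : Type*} [AddCommGroup E] [Module ℝ E] [Module ℚ≥0 E] {f : E → ℝ} {B : Set E}

lemma midpoint_mem_graphMeans {P Q : E × ℝ} (hP : P ∈ graphMeans f B) (hQ : Q ∈ graphMeans f B) :
    midpoint ℝ P Q ∈ graphMeans f B := by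
  obtain ⟨κ, _, _, x, hx, hPx, hPf⟩ := hP
  obtain ⟨κ', _, _, y, hy, hQy, hQf⟩ := hQ
  refine ⟨κ × κ' × Bool, inferInstance, inferInstance, fun q => bif q.2.2 then x q.1 else y q.2.1,
    ?_, ?_, ?_⟩
  · rintro ⟨i, j, _ | _⟩
    exacts [hy j, hx i]
  · rw [expect_prod_bool_eq_midpoint, hPx, hQy]
    exact ((LinearMap.fst ℝ E ℝ).toAffineMap.map_midpoint P Q).symm
  · simp only [Bool.apply_cond f]
    rw [expect_prod_bool_eq_midpoint (fun i => f (x i)) fun j => f (y j), hPf, hQf]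
    exact ((LinearMap.snd ℝ E ℝ).toAffineMap.map_midpoint P Q).symm

lemma convex_closure_graphMeans [TopologicalSpace E] [IsTopologicalAddGroup E]
    [ContinuousSMul ℝ E] : Convex ℝ (closure (graphMeans f B)) := by
  refine convex_of_isClosed_of_midpoint_mem isClosed_closure fun P hP Q hQ =>
    map_mem_closure₂ ?_ hP hQ fun _ hP _ hQ => midpoint_mem_graphMeans hP hQ
  simp only [midpoint_eq_smul_add, Function.uncurry_def]
  fun_prop

end ConvexClosure

section AffineApproximation

lemma isCompact_setOf_abs_sub_le {E : Type*} [TopologicalSpace E] {f : E → ℝ} {B : Set E}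
    (hB : IsCompact B) (hf : ContinuousOn f B) (C : ℝ) :
    IsCompact {P : E × ℝ | P.1 ∈ B ∧ |P.2 - f P.1| ≤ C} := by
  have htube : {P : E × ℝ | P.1 ∈ B ∧ |P.2 - f P.1| ≤ C} =
      (fun q => (q.1, f q.1 + q.2)) '' B ×ˢ Set.Icc (-C) C := by
    refine Set.Subset.antisymm (fun P hP => ?_) ?_
    · exact ⟨(P.1, P.2 - f P.1), ⟨hP.1, abs_le.mp hP.2⟩, by simp⟩
    · rintro _ ⟨q, hq, rfl⟩
      exact ⟨hq.1, by simpa using abs_le.mpr hq.2⟩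
  rw [htube]
  exact (hB.prod isCompact_Icc).image_of_continuousOn
    (continuousOn_fst.prodMk ((hf.comp continuousOn_fst fun _ h => h.1).add continuousOn_snd))

lemma exists_affine_near_of_abs_sub_lt {E : Type*} [AddCommGroup E] [Module ℝ E]
    [TopologicalSpace E] [IsTopologicalAddGroup E] [ContinuousSMul ℝ E] [LocallyConvexSpace ℝ E]
    [T2Space E] {A : Set (E × ℝ)} (hconv : Convex ℝ A) (hcomp : IsCompact A) {D : ℝ}
    (hthin : ∀ x s s', (x, s) ∈ A → (x, s') ∈ A → |s - s'| < 2 * D) :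
    ∃ (c : ℝ) (φ : E →L[ℝ] ℝ), ∀ P ∈ A, |P.2 - (c + φ P.1)| ≤ D := by
  have hdisj : Disjoint ((fun P => ((0, -D) : E × ℝ) + P) '' A)
      ((fun P => ((0, D) : E × ℝ) + P) '' A) := by
    rw [Set.disjoint_left]
    rintro _ ⟨⟨x, s⟩, hs, rfl⟩ ⟨⟨x', s'⟩, hs', heq⟩
    simp only [Prod.mk_add_mk, zero_add, Prod.mk.injEq] at heq
    obtain ⟨rfl, heq⟩ := heq
    have := abs_lt.mp (hthin _ _ _ hs hs')
    linarith
  obtain ⟨g, u, v, hu, huv, hv⟩ := geometric_hahn_banach_compact_closed (hconv.translate (0, -D))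
    (hcomp.image (continuous_const_add _)) (hconv.translate (0, D))
    (hcomp.image (continuous_const_add _)).isClosed hdisj
  rw [Set.forall_mem_image] at hu hv
  set β := g (0, 1) with hβ
  have hvert (r : ℝ) : g (0, r) = r * β := by
    rw [hβ, ← smul_eq_mul, ← map_smul, Prod.smul_mk, smul_zero, smul_eq_mul, mul_one]
  rcases A.eq_empty_or_nonempty with rfl | ⟨P₀, hP₀⟩
  · exact ⟨0, 0, by simp⟩
  have hβpos : 0 < β := by
    have hD := hthin _ _ _ hP₀ hP₀
    rw [sub_self, abs_zero] at hD
    have hlow := hu hP₀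
    have hupp := hv hP₀
    rw [map_add, hvert] at hlow hupp
    nlinarith
  refine ⟨u / β, -(β⁻¹ • g.comp (.inl ℝ E ℝ)), fun P hP => ?_⟩
  have hlow := hu hP
  have hupp := hv hP
  have hsplit : g P = g (P.1, 0) + P.2 * β := by
    rw [← hvert, ← map_add, Prod.mk_add_mk, add_zero, zero_add]
  rw [map_add, hvert, hsplit] at hlow hupp
  have hgap : (P.2 - (u / β + -(β⁻¹ * g (P.1, 0)))) * β = g (P.1, 0) + P.2 * β - u := by
    field_simp
    ring
  simp only [neg_apply, smul_apply, ContinuousLinearMap.comp_apply,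
    ContinuousLinearMap.inl_apply, smul_eq_mul]
  rw [abs_le]
  constructor <;> refine le_of_mul_le_mul_right ?_ hβpos <;> rw [hgap] <;> linarith

variable {ι : Type*} {B : Set (ι → ℝ)} {f : (ι → ℝ) → ℝ} {K : ℝ}

lemma IsTwoConvex.exists_affine_near (hB : IsTwoConvex B) (hc : IsCompact B)
    (hf : ContinuousOn f B) (H : NearlyAffineOn f B K) :
    ∃ (c : ℝ) (φ : (ι → ℝ) →L[ℝ] ℝ), ∀ x ∈ B, |f x - (c + φ x)| ≤ 84 + 3 / 4 * K := by
  let tube : Set ((ι → ℝ) × ℝ) := {P | P.1 ∈ B ∧ |P.2 - f P.1| ≤ 83 + 3 / 4 * K}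
  have htube : IsCompact tube := isCompact_setOf_abs_sub_le hc hf _
  have hmeans : graphMeans f B ⊆ tube := by
    rintro ⟨_, _⟩ ⟨κ, _, _, x, hx, rfl, rfl⟩
    exact ⟨convex_expect_mem hB.convex univ_nonempty fun i _ => hx i,
      H.abs_expect_sub_map_barycentre_le hB hx⟩
  have hnear : closure (graphMeans f B) ⊆ tube := closure_minimal hmeans htube.isClosed
  have hthin (x s s') (hs : (x, s) ∈ closure (graphMeans f B))
      (hs' : (x, s') ∈ closure (graphMeans f B)) : |s - s'| < 2 * (84 + 3 / 4 * K) := by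
    have h := abs_le.mp (hnear hs).2
    have h' := abs_le.mp (hnear hs').2
    rw [abs_lt]
    constructor <;> linarith
  obtain ⟨c, φ, hφ⟩ := exists_affine_near_of_abs_sub_lt convex_closure_graphMeans
    (htube.closure_of_subset hmeans) hthin
  exact ⟨c, φ, fun x hx => hφ _ (subset_closure (mk_mem_graphMeans hx))⟩

lemma IsTwoConvex.exists_linear_near (hB : IsTwoConvex B) (hc : IsCompact B)
    (hf : ContinuousOn f B) (H : NearlyAffineOn f B K) :
    ∃ φ : (ι → ℝ) →L[ℝ] ℝ, ∀ x ∈ B, |f x - φ x| ≤ 169 / 2 + 3 / 4 * K := by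
  obtain ⟨c, φ, hφ⟩ := hB.exists_affine_near hc hf H
  refine ⟨φ, fun x hx => ?_⟩
  have hodd := H.midpoint_le x hx (-x) (hB.neg_mem hx)
  rw [midpoint_self_neg, H.map_zero, mul_zero, sub_zero] at hodd
  have hx' := hφ x hx
  have hneg := hφ (-x) (hB.neg_mem hx)
  rw [map_neg] at hneg
  rw [abs_le] at hodd hx' hneg ⊢
  constructor <;> linarith

lemma NearlyAffineOn.sub_linear {E : Type*} [AddCommGroup E] [Module ℝ E] {B : Set E} {f : E → ℝ}
    (H : NearlyAffineOn f B K) (φ : E →ₗ[ℝ] ℝ) {K' : ℝ} (hφ : ∀ x ∈ B, |f x - φ x| ≤ K') :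
    NearlyAffineOn (fun x => f x - φ x) B K' where
  midpoint_le x hx y hy := by
    convert H.midpoint_le x hx y hy using 2
    simp only [midpoint_eq_smul_add, invOf_eq_inv, map_smul, map_add, smul_eq_mul]
    ring
  map_zero := by rw [H.map_zero, _root_.map_zero, sub_zero]
  bound := hφ

theorem whitney_lp_large_p_uniform_general (hB : IsTwoConvex B) (hc : IsCompact B)
    (hf : ContinuousOn f B) (hd : diffBound 2 B f 1) :
    ∃ (c : ℝ) (φ : (ι → ℝ) →L[ℝ] ℝ), ∀ x ∈ B, |f x - (c + φ x)| ≤ 339 := by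
  let S : Set ℝ := {K | ∃ φ : (ι → ℝ) →L[ℝ] ℝ, NearlyAffineOn (fun x => f x - f 0 - φ x) B K}
  have hne : S.Nonempty := by
    obtain ⟨K, hK⟩ := hc.exists_bound_of_continuousOn (hf.sub continuousOn_const)
    refine ⟨K, 0, fun x hx y hy => ?_, by simp, fun x hx => by simpa using hK x hx⟩
    convert abs_add_sub_two_mul_map_midpoint_le hB.convex hd hx hy using 2
    simp only [zero_apply]
    ring
  have hbdd : BddBelow S :=
    ⟨0, fun K ⟨_, H⟩ => (abs_nonneg _).trans (H.bound 0 hB.zero_mem)⟩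
  have hstep (K : ℝ) (hK : K ∈ S) : 169 / 2 + 3 / 4 * K ∈ S := by
    obtain ⟨φ, H⟩ := hK
    obtain ⟨ψ, hψ⟩ := hB.exists_linear_near hc
      ((hf.sub continuousOn_const).sub φ.continuous.continuousOn) H
    refine ⟨φ + ψ, ?_⟩
    simpa only [add_apply, ContinuousLinearMap.coe_coe, sub_sub, add_assoc]
      using H.sub_linear ψ.toLinearMap hψ
  obtain ⟨K, ⟨φ, H⟩, hK⟩ := exists_lt_of_affine_step hne hbdd (by norm_num) (by norm_num) hstep
    (by norm_num : (169 / 2 : ℝ) < (1 - 3 / 4) * 339)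
  exact ⟨f 0, φ, fun x hx => by simpa only [sub_sub] using (H.bound x hx).trans hK.le⟩

lemma IsTwoConvex.exists_affine_coeffs_near [Fintype ι] (hB : IsTwoConvex B) (hc : IsCompact B)
    (hf : ContinuousOn f B) (hd : diffBound 2 B f 1) :
    ∃ (c : ℝ) (a : ι → ℝ), ∀ x ∈ B, |f x - (c + ∑ i, a i * x i)| ≤ 339 := by
  classical
  obtain ⟨c, φ, hφ⟩ := whitney_lp_large_p_uniform_general hB hc hf hd
  refine ⟨c, fun i => φ fun j => if i = j then 1 else 0, fun x hx => ?_⟩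
  simpa only [← φ.coe_coe, φ.toLinearMap.pi_apply_eq_sum_univ x, smul_eq_mul, mul_comm]
    using hφ x hx

end AffineApproximation

/-- Theorem 3.8(c): `w₂(ℓ_pⁿ) ≤ 1602` uniformly in `n` for all `2 ≤ p ≤ ∞`. -/
theorem whitney_lp_large_p_uniform :
    (∀ p : ℝ, 2 ≤ p → ∀ n : ℕ, 1 ≤ n →
      ∀ f : (Fin n → ℝ) → ℝ, ContinuousOn f (lpBall n p) → diffBound 2 (lpBall n p) f 1 →
        ∃ (c : ℝ) (a : Fin n → ℝ), ∀ x ∈ lpBall n p,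
          |f x - (c + ∑ i, a i * x i)| ≤ 1602) ∧
    (∀ n : ℕ, 1 ≤ n →
      ∀ f : (Fin n → ℝ) → ℝ, ContinuousOn f (lInftyBall n) → diffBound 2 (lInftyBall n) f 1 →
        ∃ (c : ℝ) (a : Fin n → ℝ), ∀ x ∈ lInftyBall n,
          |f x - (c + ∑ i, a i * x i)| ≤ 1602) := by
  have hconst : (339 : ℝ) ≤ 1602 := by norm_num
  refine ⟨fun p hp n _ f hf hd => ?_, fun n _ f hf hd => ?_⟩
  · obtain ⟨c, a, h⟩ := (isTwoConvex_lpBall hp).exists_affine_coeffs_near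
      (isCompact_lpBall (by linarith)) hf hd
    exact ⟨c, a, fun x hx => (h x hx).trans hconst⟩
  · obtain ⟨c, a, h⟩ := (isTwoConvex_lInftyBall n).exists_affine_coeffs_near
      (isCompact_lInftyBall n) hf hd
    exact ⟨c, a, fun x hx => (h x hx).trans hconst⟩
end

section
/- There is an absolute constant C such that for every p with 1 < p ≤ 2, every finite-dimensional real normed space X that has type p with constant T ≥ 1, and every continuous function f : B_X → ℝ with ω₂(f;B_X) ≤ 1, there exists an affine function φ on X with sup_{x∈B_X} |f(x) − φ(x)| ≤ C (p−1)^{−1} (1 + |log(p−1)| + log T). (Theorem 3.11: w₂(X) ≤ C(p−1)^{−1}(1+|log(p−1)|+log T_p(X)).) -/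
open Finset

/-- `X` has (Rademacher) type `p` with constant `T`. -/
def HasTypeConst (X : Type*) [NormedAddCommGroup X] [NormedSpace ℝ X] (p T : ℝ) : Prop :=
  ∀ (k : ℕ) (x : Fin k → X),
    ((∑ ε : Fin k → Bool, ‖∑ i, (if ε i then (1 : ℝ) else -1) • x i‖ ^ p) / 2 ^ k) ^ (1 / p) ≤
      T * (∑ i, ‖x i‖ ^ p) ^ (1 / p)

/-!
It is enough to approximate the odd part of `f` by a linear functional, since `f` differs from
`f 0` plus its odd part by at most half the midpoint defect `δ`.

Suppose `f` is odd and `|f| ≤ D` on the unit ball. By duality, `f` is within `R` of a linear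
functional as soon as `|∑ aᵢ f(xᵢ)| ≤ R` for all convex combinations `∑ aᵢ xᵢ = 0` of points of the
ball. To bound such a sum, sample `2 ^ m` of the points independently according to `a`. Splitting
the sample dyadically, the mean of `f` over it differs from `f` at its mean by at most `mδ/2`. Since
`X` has type `p`, symmetrization shows that the sample mean has expected norm at most
`2T(2 ^ m) ^ (1/p - 1)`, and `|f(x)| ≤ 2D‖x‖ + δ`. For `m` about `p/(p-1) * log₂ (8T)` this gives
`R = D/2 + (m/2 + 1)δ`. Replacing `f` by its difference with the functional and iterating, the error
converges to the fixed point `(m + 2)δ` of this halving step.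
-/

open Metric Topology

/-- The odd part of a function, i.e. its component that an odd (e.g. linear) function can match. -/
noncomputable def oddPart {G : Type*} [Neg G] (f : G → ℝ) (x : G) : ℝ := (f x - f (-x)) / 2

theorem odd_oddPart {G : Type*} [InvolutiveNeg G] (f : G → ℝ) : (oddPart f).Odd := fun x ↦ by
  rw [oddPart, oddPart, neg_neg]; ring

theorem isBoundedUnder_abs_oddPart {G : Type*} [TopologicalSpace G] [AddGroup G]
    [ContinuousNeg G] {f : G → ℝ} (hf : (𝓝 (0 : G)).IsBoundedUnder (· ≤ ·) (|f ·|)) :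
    (𝓝 (0 : G)).IsBoundedUnder (· ≤ ·) (|oddPart f ·|) := by
  obtain ⟨M, hM⟩ := hf
  rw [Filter.eventually_map] at hM
  have hM_neg : ∀ᶠ x : G in 𝓝 0, |f (-x)| ≤ M :=
    (continuous_neg.tendsto' (0 : G) 0 neg_zero).eventually hM
  refine ⟨M, Filter.eventually_map.mpr ?_⟩
  filter_upwards [hM, hM_neg] with x hx hx_neg
  rw [oddPart]
  rw [abs_le] at *
  constructor <;> linarith

section ApproxMidpointAffine

variable {E : Type*} [AddCommGroup E] [Module ℝ E] {K : Set E} {f : E → ℝ} {δ : ℝ}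

/-- `f` is affine on `K` up to the error `δ`, as tested at midpoints. For convex `K` this is
`ω₂(f; K) ≤ δ`, written in terms of the endpoints `x`, `x + 2h` of the progression. -/
def ApproxMidpointAffineOn (δ : ℝ) (K : Set E) (f : E → ℝ) : Prop :=
  ∀ ⦃x⦄, x ∈ K → ∀ ⦃y⦄, y ∈ K → |f x + f y - 2 * f (midpoint ℝ x y)| ≤ δ

theorem diffBound.approxMidpointAffineOn (hf : diffBound 2 K f δ) (hK : Convex ℝ K) :
    ApproxMidpointAffineOn δ K f := by
  intro x hx y hy
  set h : E := (2⁻¹ : ℝ) • (y - x)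
  have start : x + (0 : ℝ) • h = x := by simp
  have middle : x + (1 : ℝ) • h = midpoint ℝ x y := by
    rw [midpoint_eq_smul_add, invOf_eq_inv]; module
  have finish : x + (2 : ℝ) • h = y := by module
  have hmem : ∀ j : ℕ, j ≤ 2 → x + (j : ℝ) • h ∈ K := by
    intro j hj
    interval_cases j
    · simpa [start] using hx
    · rw [Nat.cast_one, middle]; exact hK.midpoint_mem hx hy
    · simpa [finish] using hy
  have hdiff := hf x h hmem
  simp only [Finset.sum_range_succ, Finset.sum_range_zero, Nat.cast_zero, Nat.cast_one,
    Nat.cast_ofNat, start, middle, finish] at hdiff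
  convert hdiff using 2
  norm_num
  ring

theorem two_pow_inv_smul_sum_mem_of_convex {ι : Type*} {s : Finset ι} {m : ℕ} {y : ι → E}
    (hK : Convex ℝ K) (hs : #s = 2 ^ m) (hy : ∀ i ∈ s, y i ∈ K) :
    ((2 : ℝ) ^ m)⁻¹ • ∑ i ∈ s, y i ∈ K := by
  rw [Finset.smul_sum]
  exact hK.sum_mem (fun _ _ ↦ by positivity) (by simp [hs]) hy

namespace ApproxMidpointAffineOn

theorem sub_linearMap (hf : ApproxMidpointAffineOn δ K f) (g : E →ₗ[ℝ] ℝ) :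
    ApproxMidpointAffineOn δ K (fun x ↦ f x - g x) := by
  intro x hx y hy
  have hg : 2 * g (midpoint ℝ x y) = g x + g y := by
    rw [midpoint_eq_smul_add, map_smul, map_add, smul_eq_mul, invOf_eq_inv]; ring
  convert hf hx hy using 2
  linear_combination hg

theorem oddPart_of_neg_mem (hf : ApproxMidpointAffineOn δ K f) (hneg : ∀ x ∈ K, -x ∈ K) :
    ApproxMidpointAffineOn δ K (oddPart f) := by
  intro x hx y hy
  have hxy := hf hx hy
  have hxy_neg := hf (hneg x hx) (hneg y hy)
  have hmid : midpoint ℝ (-x) (-y) = -midpoint ℝ x y := by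
    simp only [midpoint_eq_smul_add]; module
  rw [hmid] at hxy_neg
  rw [oddPart, oddPart, oddPart]
  rw [abs_le] at *
  constructor <;> linarith

theorem abs_sub_oddPart_le (hf : ApproxMidpointAffineOn δ K f) {x : E} (hx : x ∈ K)
    (hneg : -x ∈ K) : |f x - f 0 - oddPart f x| ≤ δ / 2 := by
  have hsymm := hf hx hneg
  rw [midpoint_self_neg] at hsymm
  rw [oddPart]
  rw [abs_le] at *
  constructor <;> linarith

theorem abs_average_sub_le {ι : Type*} (hf : ApproxMidpointAffineOn δ K f) (hK : Convex ℝ K)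
    {m : ℕ} {s : Finset ι} (hs : #s = 2 ^ m) {y : ι → E} (hy : ∀ i ∈ s, y i ∈ K) :
    |((2 : ℝ) ^ m)⁻¹ * ∑ i ∈ s, f (y i) - f (((2 : ℝ) ^ m)⁻¹ • ∑ i ∈ s, y i)| ≤ m / 2 * δ := by
  classical
  induction m generalizing s with
  | zero =>
    obtain ⟨i, rfl⟩ := Finset.card_eq_one.mp (by simpa using hs)
    simp
  | succ m ih =>
    obtain ⟨t, hts, ht⟩ : ∃ t ⊆ s, #t = 2 ^ m :=
      Finset.exists_subset_card_eq (hs ▸ Nat.pow_le_pow_right two_pos m.le_succ)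
    have hu : #(s \ t) = 2 ^ m := by
      rw [Finset.card_sdiff_of_subset hts, hs, ht, pow_succ]; lia
    have hyt : ∀ i ∈ t, y i ∈ K := fun i hi ↦ hy i (hts hi)
    have hyu : ∀ i ∈ s \ t, y i ∈ K := fun i hi ↦ hy i (Finset.mem_sdiff.mp hi).1
    have hmid : ((2 : ℝ) ^ (m + 1))⁻¹ • ∑ i ∈ s, y i =
        midpoint ℝ (((2 : ℝ) ^ m)⁻¹ • ∑ i ∈ s \ t, y i) (((2 : ℝ) ^ m)⁻¹ • ∑ i ∈ t, y i) := by
      rw [midpoint_eq_smul_add, ← smul_add, Finset.sum_sdiff hts, smul_smul, invOf_eq_inv,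
        pow_succ', mul_inv]
    have hmean : ((2 : ℝ) ^ (m + 1))⁻¹ * ∑ i ∈ s, f (y i) =
        (((2 : ℝ) ^ m)⁻¹ * ∑ i ∈ s \ t, f (y i) + ((2 : ℝ) ^ m)⁻¹ * ∑ i ∈ t, f (y i)) / 2 := by
      rw [← mul_add, Finset.sum_sdiff hts, pow_succ', mul_inv]; ring
    have hleft := ih hu hyu
    have hright := ih ht hyt
    have hjoin := hf (two_pow_inv_smul_sum_mem_of_convex hK hu hyu)
      (two_pow_inv_smul_sum_mem_of_convex hK ht hyt)
    rw [hmid, hmean]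
    push_cast
    rw [abs_le] at *
    constructor <;> linarith

theorem abs_two_pow_inv_mul_sub_le (hf : ApproxMidpointAffineOn δ K f) (hK : StarConvex ℝ 0 K)
    (hf0 : f 0 = 0) {x : E} (hx : x ∈ K) (k : ℕ) :
    |((2 : ℝ) ^ k)⁻¹ * f x - f (((2 : ℝ) ^ k)⁻¹ • x)| ≤ δ := by
  have h0 : (0 : E) ∈ K := by simpa using hK hx zero_le_one le_rfl (by simp)
  induction k with
  | zero => simpa using (abs_nonneg _).trans (hf h0 h0)
  | succ k ih =>
    have hmem : ((2 : ℝ) ^ k)⁻¹ • x ∈ K :=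
      hK.smul_mem hx (by positivity) (inv_le_one_of_one_le₀ (one_le_pow₀ one_le_two))
    have hhalf := hf hmem h0
    rw [midpoint_eq_smul_add, add_zero, smul_smul, invOf_eq_inv, ← mul_inv, ← pow_succ',
      hf0] at hhalf
    rw [pow_succ', mul_inv] at *
    rw [abs_le] at *
    constructor <;> linarith

end ApproxMidpointAffineOn

end ApproxMidpointAffine

namespace ApproxMidpointAffineOn

variable {X : Type*} [NormedAddCommGroup X] [NormedSpace ℝ X] {f : X → ℝ} {D δ : ℝ}

theorem abs_le_two_mul_norm_add (hf : ApproxMidpointAffineOn δ (closedBall (0 : X) 1) f)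
    (hf0 : f 0 = 0) (hD : ∀ x ∈ closedBall (0 : X) 1, |f x| ≤ D) {x : X}
    (hx : x ∈ closedBall 0 1) : |f x| ≤ 2 * D * ‖x‖ + δ := by
  rcases eq_or_ne x 0 with rfl | hx0
  · simpa [hf0] using (abs_nonneg _).trans (hf hx hx)
  obtain ⟨k, hk_lt, hk_le⟩ := exists_nat_pow_near_of_lt_one (norm_pos_iff.mpr hx0)
    (mem_closedBall_zero_iff.mp hx) (by norm_num : (0 : ℝ) < 2⁻¹) (by norm_num)
  rw [inv_pow] at hk_lt hk_le
  set y : X := (2 : ℝ) ^ k • x with hy_def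
  have hy : y ∈ closedBall 0 1 := by
    rw [mem_closedBall_zero_iff, norm_smul, norm_pow, Real.norm_two]
    exact (le_inv_mul_iff₀ (by positivity)).mp (by simpa using hk_le)
  have hyx : ((2 : ℝ) ^ k)⁻¹ • y = x := by rw [hy_def, inv_smul_smul₀ (by positivity)]
  have hscale : |((2 : ℝ) ^ k)⁻¹ * f y - f x| ≤ δ := by
    simpa only [hyx] using hf.abs_two_pow_inv_mul_sub_le
      ((convex_closedBall 0 1).starConvex (by simp)) hf0 hy k
  have hfy : |((2 : ℝ) ^ k)⁻¹ * f y| ≤ 2 * D * ‖x‖ := by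
    rw [abs_mul, abs_of_pos (by positivity)]
    calc ((2 : ℝ) ^ k)⁻¹ * |f y| ≤ (2 * ‖x‖) * D := by
          gcongr
          · rw [pow_succ', mul_inv] at hk_lt; linarith
          · exact hD y hy
      _ = 2 * D * ‖x‖ := by ring
  rw [abs_le] at *
  constructor <;> linarith

theorem exists_abs_le_of_isBoundedUnder (hf : ApproxMidpointAffineOn δ (closedBall (0 : X) 1) f)
    (hf0 : f 0 = 0) (hbdd : (𝓝 (0 : X)).IsBoundedUnder (· ≤ ·) (|f ·|)) :
    ∃ D, ∀ x ∈ closedBall (0 : X) 1, |f x| ≤ D := by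
  obtain ⟨M, hM⟩ := hbdd
  obtain ⟨r, hr, hball⟩ := Metric.eventually_nhds_iff_ball.mp (Filter.eventually_map.mp hM)
  obtain ⟨k, hk⟩ := exists_pow_lt_of_lt_one hr (by norm_num : (2⁻¹ : ℝ) < 1)
  refine ⟨2 ^ k * (M + δ), fun x hx ↦ ?_⟩
  have hsmall : |f (((2 : ℝ) ^ k)⁻¹ • x)| ≤ M := by
    refine hball _ (mem_ball_zero_iff.mpr ?_)
    rw [norm_smul, norm_inv, norm_pow, Real.norm_two, ← inv_pow]
    exact (mul_le_of_le_one_right (by positivity) (mem_closedBall_zero_iff.mp hx)).trans_lt hk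
  have hscale := hf.abs_two_pow_inv_mul_sub_le
    ((convex_closedBall 0 1).starConvex (by simp)) hf0 hx k
  rw [← inv_mul_le_iff₀ (by positivity)]
  calc ((2 : ℝ) ^ k)⁻¹ * |f x| = |((2 : ℝ) ^ k)⁻¹ * f x| := by
        rw [abs_mul, abs_of_pos (by positivity : (0 : ℝ) < ((2 : ℝ) ^ k)⁻¹)]
    _ ≤ |f (((2 : ℝ) ^ k)⁻¹ • x)| + |((2 : ℝ) ^ k)⁻¹ * f x - f (((2 : ℝ) ^ k)⁻¹ • x)| :=
        sub_le_iff_le_add'.mp (abs_sub_abs_le_abs_sub _ _)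
    _ ≤ M + δ := add_le_add hsmall hscale

end ApproxMidpointAffineOn

section Sampling

variable {ι κ : Type*} [Fintype ι] [Fintype κ] {a : ι → ℝ}

/-- The law of a sample `(s k)ₖ` drawn independently from the finite probability vector `a`. -/
def iidWeight (a : ι → ℝ) (s : κ → ι) : ℝ := ∏ k, a (s k)

theorem iidWeight_mem_stdSimplex [DecidableEq κ] (ha : a ∈ stdSimplex ℝ ι) :
    (iidWeight a : (κ → ι) → ℝ) ∈ stdSimplex ℝ (κ → ι) := by
  refine ⟨fun s ↦ Finset.prod_nonneg fun k _ ↦ ha.1 (s k), ?_⟩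
  calc ∑ s : κ → ι, ∏ k, a (s k) = ∏ _k : κ, ∑ i, a i := (Fintype.prod_sum fun _ i ↦ a i).symm
    _ = 1 := by simp [ha.2]

theorem sum_iidWeight_smul_apply [DecidableEq κ] {E : Type*} [AddCommGroup E] [Module ℝ E]
    (ha : a ∈ stdSimplex ℝ ι) (φ : ι → E) (k : κ) :
    ∑ s : κ → ι, iidWeight a s • φ (s k) = ∑ i, a i • φ i := by
  have hsplit (i : ι) (t : {j // j ≠ k} → ι) :
      iidWeight a ((Equiv.funSplitAt k ι).symm (i, t)) = a i * iidWeight a t := by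
    rw [iidWeight, Fintype.prod_eq_mul_prod_subtype_ne _ k, iidWeight]
    congr 1
    · simp [Equiv.funSplitAt]
    · refine Fintype.prod_congr _ _ fun j ↦ ?_
      simp [Equiv.funSplitAt, j.2]
  rw [← (Equiv.funSplitAt k ι).symm.sum_comp, Fintype.sum_prod_type]
  refine Fintype.sum_congr _ _ fun i ↦ ?_
  simp only [hsplit]
  simp only [Equiv.funSplitAt, Equiv.piSplitAt_symm_apply, dite_true]
  rw [← Finset.sum_smul, ← Finset.mul_sum, (iidWeight_mem_stdSimplex ha).2, mul_one]

theorem sum_iidWeight_smul_sum [DecidableEq κ] {E : Type*} [AddCommGroup E] [Module ℝ E]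
    (ha : a ∈ stdSimplex ℝ ι) (φ : ι → E) :
    ∑ s : κ → ι, iidWeight a s • ∑ k, φ (s k) = Fintype.card κ • ∑ i, a i • φ i := by
  simp_rw [Finset.smul_sum]
  rw [Finset.sum_comm]
  simp [sum_iidWeight_smul_apply ha, Finset.smul_sum]

variable {X : Type*} [NormedAddCommGroup X] [NormedSpace ℝ X]

theorem norm_le_sum_mul_norm_sub {w : ι → ℝ} (hw : w ∈ stdSimplex ℝ ι) {v : ι → X}
    (hv : ∑ i, w i • v i = 0) (u : X) : ‖u‖ ≤ ∑ i, w i * ‖u - v i‖ :=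
  calc ‖u‖ = ‖∑ i, w i • (u - v i)‖ := by
        simp [smul_sub, hv, ← Finset.sum_smul, hw.2]
    _ ≤ ∑ i, ‖w i • (u - v i)‖ := norm_sum_le _ _
    _ = ∑ i, w i * ‖u - v i‖ := by simp [norm_smul, abs_of_nonneg (hw.1 _)]

theorem sum_iidWeight_mul_norm_sum_le_symmetrized [DecidableEq κ]
    (ha : a ∈ stdSimplex ℝ ι) {x : ι → X} (hx : ∑ i, a i • x i = 0) :
    ∑ s : κ → ι, iidWeight a s * ‖∑ k, x (s k)‖ ≤
      ∑ s : κ → ι, ∑ t : κ → ι, iidWeight a s * iidWeight a t * ‖∑ k, (x (s k) - x (t k))‖ := by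
  have hcentered : ∑ t : κ → ι, iidWeight a t • ∑ k, x (t k) = 0 := by
    rw [sum_iidWeight_smul_sum ha, hx, smul_zero]
  have hweights := iidWeight_mem_stdSimplex (κ := κ) ha
  simp_rw [mul_assoc, ← Finset.mul_sum, Finset.sum_sub_distrib]
  gcongr with s
  · exact hweights.1 s
  · exact norm_le_sum_mul_norm_sub hweights hcentered _

/-- Exchanging `s k` and `t k` wherever the sign is `-1` preserves the joint law of `(s, t)`. -/
theorem sum_iidWeight_mul_norm_signed_sum [DecidableEq κ] (x : ι → X) (ε : κ → Bool) :
    ∑ s : κ → ι, ∑ t : κ → ι, iidWeight a s * iidWeight a t *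
        ‖∑ k, (if ε k then (1 : ℝ) else -1) • (x (s k) - x (t k))‖ =
      ∑ s : κ → ι, ∑ t : κ → ι, iidWeight a s * iidWeight a t * ‖∑ k, (x (s k) - x (t k))‖ := by
  let swap (q : (κ → ι) × (κ → ι)) : (κ → ι) × (κ → ι) :=
    (fun k ↦ if ε k then q.1 k else q.2 k, fun k ↦ if ε k then q.2 k else q.1 k)
  have hswap : Function.Involutive swap := by
    intro q
    ext k <;> by_cases hk : ε k <;> simp [swap, hk]
  simp only [← Fintype.sum_prod_type']
  rw [← Equiv.sum_comp hswap.toPerm]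
  refine Fintype.sum_congr _ _ fun q ↦ ?_
  simp only [Function.Involutive.coe_toPerm, iidWeight, ← Finset.prod_mul_distrib]
  congr 1
  · refine Fintype.prod_congr _ _ fun k ↦ ?_
    by_cases hk : ε k <;> simp [swap, hk, mul_comm]
  · refine congrArg norm (Fintype.sum_congr _ _ fun k ↦ ?_)
    by_cases hk : ε k <;> simp [swap, hk]

end Sampling

namespace HasTypeConst

variable {X : Type*} [NormedAddCommGroup X] [NormedSpace ℝ X] {p T : ℝ}

theorem mean_norm_signed_sum_le (hX : HasTypeConst X p T) (hp : 1 ≤ p) (hT : 0 ≤ T) {n : ℕ}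
    {z : Fin n → X} {r : ℝ} (hr : 0 ≤ r) (hz : ∀ i, ‖z i‖ ≤ r) :
    (∑ ε : Fin n → Bool, ‖∑ i, (if ε i then (1 : ℝ) else -1) • z i‖) / 2 ^ n ≤
      T * ((n : ℝ) ^ (1 / p) * r) := by
  have hp0 : 0 < p := by linarith
  have power_mean := Real.arith_mean_le_rpow_mean (univ : Finset (Fin n → Bool))
    (fun _ ↦ ((2 : ℝ) ^ n)⁻¹) (fun ε ↦ ‖∑ i, (if ε i then (1 : ℝ) else -1) • z i‖)
    (fun _ _ ↦ by positivity) (by simp) (fun _ _ ↦ norm_nonneg _) hp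
  rw [← Finset.mul_sum, ← Finset.mul_sum, inv_mul_eq_div, inv_mul_eq_div] at power_mean
  calc _ ≤ T * (∑ i, ‖z i‖ ^ p) ^ (1 / p) := power_mean.trans (hX n z)
    _ ≤ T * (∑ _i : Fin n, r ^ p) ^ (1 / p) := by gcongr with i; exact hz i
    _ = T * ((n : ℝ) ^ (1 / p) * r) := by
      rw [Finset.sum_const, Finset.card_univ, Fintype.card_fin, nsmul_eq_mul,
        Real.mul_rpow (by positivity) (by positivity), one_div, Real.rpow_rpow_inv hr hp0.ne']

theorem sum_iidWeight_mul_norm_sum_le {ι : Type*} [Fintype ι] {a : ι → ℝ} {x : ι → X}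
    (hX : HasTypeConst X p T) (hp : 1 ≤ p) (hT : 0 ≤ T) (ha : a ∈ stdSimplex ℝ ι)
    (hx : ∀ i, x i ∈ closedBall 0 1) (hbar : ∑ i, a i • x i = 0) (n : ℕ) :
    ∑ s : Fin n → ι, iidWeight a s * ‖∑ k, x (s k)‖ ≤ T * ((n : ℝ) ^ (1 / p) * 2) := by
  have hweights := iidWeight_mem_stdSimplex (κ := Fin n) ha
  have hnorm (i j : ι) : ‖x i - x j‖ ≤ 2 := by
    have hi := mem_closedBall_zero_iff.mp (hx i)
    have hj := mem_closedBall_zero_iff.mp (hx j)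
    linarith [norm_sub_le (x i) (x j)]
  calc _ ≤ ∑ s : Fin n → ι, ∑ t : Fin n → ι,
          iidWeight a s * iidWeight a t * ‖∑ k, (x (s k) - x (t k))‖ :=
      sum_iidWeight_mul_norm_sum_le_symmetrized ha hbar
    _ = (∑ ε : Fin n → Bool, ∑ s : Fin n → ι, ∑ t : Fin n → ι, iidWeight a s * iidWeight a t *
          ‖∑ k, (if ε k then (1 : ℝ) else -1) • (x (s k) - x (t k))‖) / 2 ^ n := by
      simp only [sum_iidWeight_mul_norm_signed_sum]
      simp
    _ = ∑ s : Fin n → ι, ∑ t : Fin n → ι, iidWeight a s * iidWeight a t *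
          ((∑ ε : Fin n → Bool, ‖∑ k, (if ε k then (1 : ℝ) else -1) • (x (s k) - x (t k))‖) /
            2 ^ n) := by
      rw [Finset.sum_comm, Finset.sum_div]
      refine Fintype.sum_congr _ _ fun s ↦ ?_
      rw [Finset.sum_comm, Finset.sum_div]
      refine Fintype.sum_congr _ _ fun t ↦ ?_
      rw [← Finset.mul_sum, mul_div_assoc]
    _ ≤ ∑ s : Fin n → ι, ∑ t : Fin n → ι, iidWeight a s * iidWeight a t *
          (T * ((n : ℝ) ^ (1 / p) * 2)) := by
      gcongr with s _ t
      · exact mul_nonneg (hweights.1 s) (hweights.1 t)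
      · exact hX.mean_norm_signed_sum_le hp hT zero_le_two fun k ↦ hnorm _ _
    _ = T * ((n : ℝ) ^ (1 / p) * 2) := by
      simp_rw [← Finset.sum_mul, ← Finset.mul_sum, hweights.2, mul_one, hweights.2, one_mul]

end HasTypeConst

namespace ApproxMidpointAffineOn

variable {X : Type*} [NormedAddCommGroup X] [NormedSpace ℝ X] {f : X → ℝ} {D δ : ℝ}

theorem abs_average_le {ι : Type*} (hf : ApproxMidpointAffineOn δ (closedBall (0 : X) 1) f)
    (hf0 : f 0 = 0) (hD : ∀ x ∈ closedBall (0 : X) 1, |f x| ≤ D) {m : ℕ} {s : Finset ι}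
    (hs : #s = 2 ^ m) {y : ι → X} (hy : ∀ i ∈ s, y i ∈ closedBall 0 1) :
    |((2 : ℝ) ^ m)⁻¹ * ∑ i ∈ s, f (y i)| ≤
      2 * D * (((2 : ℝ) ^ m)⁻¹ * ‖∑ i ∈ s, y i‖) + (m / 2 + 1) * δ := by
  have hball := convex_closedBall (0 : X) 1
  have haverage := hf.abs_average_sub_le hball hs hy
  have hmean := hf.abs_le_two_mul_norm_add hf0 hD (two_pow_inv_smul_sum_mem_of_convex hball hs hy)
  rw [norm_smul, norm_inv, norm_pow, Real.norm_two] at hmean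
  rw [abs_le] at *
  constructor <;> linarith

theorem abs_sum_mul_le {ι : Type*} [Fintype ι] {a : ι → ℝ} {x : ι → X} {m : ℕ} {r : ℝ}
    (hf : ApproxMidpointAffineOn δ (closedBall (0 : X) 1) f) (hf0 : f 0 = 0)
    (hD : ∀ x ∈ closedBall (0 : X) 1, |f x| ≤ D) (ha : a ∈ stdSimplex ℝ ι)
    (hx : ∀ i, x i ∈ closedBall 0 1)
    (hr : ∑ s : Fin (2 ^ m) → ι, iidWeight a s * ‖∑ k, x (s k)‖ ≤ 2 ^ m * r) :
    |∑ i, a i * f (x i)| ≤ 2 * D * r + (m / 2 + 1) * δ := by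
  have hD0 : 0 ≤ D := (abs_nonneg _).trans (hD 0 (mem_closedBall_self zero_le_one))
  have hweights := iidWeight_mem_stdSimplex (κ := Fin (2 ^ m)) ha
  have hmean : ∑ i, a i * f (x i) =
      ∑ s : Fin (2 ^ m) → ι, iidWeight a s * (((2 : ℝ) ^ m)⁻¹ * ∑ k, f (x (s k))) := by
    have := sum_iidWeight_smul_sum (κ := Fin (2 ^ m)) ha (fun i ↦ f (x i))
    simp only [smul_eq_mul, nsmul_eq_mul, Fintype.card_fin, Nat.cast_pow, Nat.cast_ofNat] at this
    simp_rw [mul_left_comm (iidWeight a _)]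
    rw [← Finset.mul_sum, this, inv_mul_cancel_left₀ (by positivity)]
  calc |∑ i, a i * f (x i)|
      ≤ ∑ s : Fin (2 ^ m) → ι, iidWeight a s * |((2 : ℝ) ^ m)⁻¹ * ∑ k, f (x (s k))| := by
        rw [hmean]
        refine (Finset.abs_sum_le_sum_abs _ _).trans_eq (Fintype.sum_congr _ _ fun s ↦ ?_)
        rw [abs_mul, abs_of_nonneg (hweights.1 s)]
    _ ≤ ∑ s : Fin (2 ^ m) → ι, iidWeight a s *
          (2 * D * (((2 : ℝ) ^ m)⁻¹ * ‖∑ k, x (s k)‖) + (m / 2 + 1) * δ) := by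
        gcongr with s
        · exact hweights.1 s
        · exact hf.abs_average_le hf0 hD (by simp) fun k _ ↦ hx (s k)
    _ = 2 * D * (((2 : ℝ) ^ m)⁻¹ * ∑ s : Fin (2 ^ m) → ι, iidWeight a s * ‖∑ k, x (s k)‖) +
          (m / 2 + 1) * δ := by
        simp_rw [mul_add, Finset.sum_add_distrib, ← Finset.sum_mul, hweights.2, one_mul,
          Finset.mul_sum]
        congr! 2
        ring
    _ ≤ 2 * D * r + (m / 2 + 1) * δ := by
        gcongr
        exact (inv_mul_le_iff₀ (by positivity)).mpr hr

end ApproxMidpointAffineOn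

section Duality

variable {E : Type*} [AddCommGroup E] [Module ℝ E] {K : Set E}

theorem snd_nonneg_of_mem_hull_graph {F : E → ℝ}
    (hF : ∀ (n : ℕ) (c : Fin n → ℝ) (x : Fin n → E), (∀ i, 0 ≤ c i) → (∀ i, x i ∈ K) →
      ∑ i, c i • x i = 0 → 0 ≤ ∑ i, c i * F (x i)) {t : ℝ}
    (ht : ((0 : E), t) ∈ PointedCone.hull ℝ ((fun x ↦ (x, F x)) '' K)) : 0 ≤ t := by
  obtain ⟨n, c, q, hq⟩ := Submodule.mem_span_set'.mp ht
  choose x hxK hxq using fun i ↦ (q i).2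
  simp only [← hxq, Prod.ext_iff, Prod.fst_sum, Prod.snd_sum, Prod.smul_fst, Prod.smul_snd] at hq
  exact hq.2 ▸ hF n (fun i ↦ c i) x (fun i ↦ (c i).2) hxK hq.1

/-- The hull of the graph of `F` meets the line `{0} × ℝ` only in nonnegative heights, so Riesz
extension of the height functional gives `G ≥ 0` on the hull; `g` is then `-G (·, 0)`. -/
theorem exists_linearMap_le (hK : Absorbent ℝ K) {F : E → ℝ}
    (hF : ∀ (n : ℕ) (c : Fin n → ℝ) (x : Fin n → E), (∀ i, 0 ≤ c i) → (∀ i, x i ∈ K) →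
      ∑ i, c i • x i = 0 → 0 ≤ ∑ i, c i * F (x i)) :
    ∃ g : E →ₗ[ℝ] ℝ, ∀ x ∈ K, g x ≤ F x := by
  set P := PointedCone.hull ℝ ((fun x ↦ (x, F x)) '' K)
  have hgraph {x : E} (hx : x ∈ K) : (x, F x) ∈ P := PointedCone.subset_hull ⟨x, hx, rfl⟩
  let height : (E × ℝ) →ₗ.[ℝ] ℝ :=
    ⟨LinearMap.range (LinearMap.inr ℝ E ℝ), LinearMap.snd ℝ E ℝ ∘ₗ Submodule.subtype _⟩
  have hnonneg : ∀ q : height.domain, (q : E × ℝ) ∈ P → 0 ≤ height q := by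
    rintro ⟨_, t, rfl⟩ ht
    exact snd_nonneg_of_mem_hull_graph hF ht
  have hcofinal : ∀ q : E × ℝ, ∃ v : height.domain, (v : E × ℝ) + q ∈ P := by
    rintro ⟨y, t⟩
    obtain ⟨r, hr, x, hx, rfl⟩ := hK.gauge_set_nonempty (x := y)
    refine ⟨⟨_, r * F x - t, rfl⟩, ?_⟩
    convert P.smul_mem hr.le (hgraph hx) using 1
    simp
  obtain ⟨G, hG_height, hG_nonneg⟩ := riesz_extension P height hnonneg hcofinal
  refine ⟨-(G ∘ₗ LinearMap.inl ℝ E ℝ), fun x hx ↦ ?_⟩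
  have hG_split : G (x, F x) = G (x, 0) + F x := by
    rw [← Prod.fst_add_snd (x, F x), map_add]
    exact congrArg (_ + ·) (hG_height ⟨_, F x, rfl⟩)
  have := hG_nonneg _ (hgraph hx)
  simp only [LinearMap.neg_apply, LinearMap.comp_apply, LinearMap.inl_apply]
  linarith

theorem sum_mul_add_nonneg_of_stdSimplex {ι : Type*} [Fintype ι] {x : ι → E} {v : ι → ℝ} {R : ℝ}
    (hv : ∀ a ∈ stdSimplex ℝ ι, ∑ i, a i • x i = 0 → -R ≤ ∑ i, a i * v i)
    {c : ι → ℝ} (hc : ∀ i, 0 ≤ c i) (hbar : ∑ i, c i • x i = 0) :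
    0 ≤ ∑ i, c i * (v i + R) := by
  set A := ∑ i, c i with hA
  rcases (Finset.sum_nonneg fun i _ ↦ hc i : 0 ≤ A).eq_or_lt with hA0 | hA0
  · have hzero := (Finset.sum_eq_zero_iff_of_nonneg fun i _ ↦ hc i).mp hA0.symm
    exact (Finset.sum_eq_zero fun i hi ↦ by rw [hzero i hi, zero_mul]).ge
  · have hsimplex : (fun i ↦ A⁻¹ * c i) ∈ stdSimplex ℝ ι :=
      ⟨fun i ↦ mul_nonneg (inv_nonneg.mpr hA0.le) (hc i), by
        rw [← Finset.mul_sum, inv_mul_cancel₀ hA0.ne']⟩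
    have hnormalized := hv _ hsimplex (by
      simp_rw [mul_smul]
      rw [← Finset.smul_sum, hbar, smul_zero])
    simp_rw [mul_assoc] at hnormalized
    rw [← Finset.mul_sum, le_inv_mul_iff₀ hA0] at hnormalized
    simp_rw [mul_add, Finset.sum_add_distrib, ← Finset.sum_mul, ← hA]
    linarith

theorem exists_linearMap_abs_sub_le (hK : Absorbent ℝ K) (hneg : ∀ x ∈ K, -x ∈ K) {f : E → ℝ}
    (hodd : f.Odd) {R : ℝ}
    (hf : ∀ (n : ℕ) (a : Fin n → ℝ) (x : Fin n → E), a ∈ stdSimplex ℝ (Fin n) →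
      (∀ i, x i ∈ K) → ∑ i, a i • x i = 0 → -R ≤ ∑ i, a i * f (x i)) :
    ∃ g : E →ₗ[ℝ] ℝ, ∀ x ∈ K, |f x - g x| ≤ R := by
  obtain ⟨g, hg⟩ := exists_linearMap_le hK (F := fun x ↦ f x + R)
    fun n _ x hc hx hbar ↦
      sum_mul_add_nonneg_of_stdSimplex (fun a ha ↦ hf n a x ha hx) hc hbar
  refine ⟨g, fun x hx ↦ abs_le.mpr ⟨by linarith [hg x hx], ?_⟩⟩
  have := hg (-x) (hneg x hx)
  rw [map_neg, hodd x] at this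
  linarith

end Duality

namespace HasTypeConst

variable {X : Type*} [NormedAddCommGroup X] [NormedSpace ℝ X] {p T : ℝ} {f : X → ℝ} {δ : ℝ}
  {m : ℕ}

theorem exists_linearMap_abs_sub_le_half (hX : HasTypeConst X p T) (hp : 1 ≤ p) (hT : 0 ≤ T)
    (hm : 8 * T * ((2 : ℝ) ^ m) ^ (1 / p) ≤ 2 ^ m)
    (hf : ApproxMidpointAffineOn δ (closedBall (0 : X) 1) f) (hodd : f.Odd) {D : ℝ}
    (hD : ∀ x ∈ closedBall (0 : X) 1, |f x| ≤ D) :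
    ∃ g : X →ₗ[ℝ] ℝ, ∀ x ∈ closedBall (0 : X) 1, |f x - g x| ≤ D / 2 + (m / 2 + 1) * δ := by
  refine exists_linearMap_abs_sub_le (absorbent_nhds_zero (closedBall_mem_nhds 0 one_pos))
    (by simp) hodd fun n a x ha hx hbar ↦ ?_
  have hsample : ∑ s : Fin (2 ^ m) → Fin n, iidWeight a s * ‖∑ k, x (s k)‖ ≤ 2 ^ m * (1 / 4) := by
    have := hX.sum_iidWeight_mul_norm_sum_le hp hT ha hx hbar (2 ^ m)
    push_cast at this
    linarith
  linarith [(abs_le.mp (hf.abs_sum_mul_le hodd.map_zero hD ha hx hsample)).1]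

theorem exists_linearMap_abs_sub_le_add (hX : HasTypeConst X p T) (hp : 1 ≤ p) (hT : 0 ≤ T)
    (hm : 8 * T * ((2 : ℝ) ^ m) ^ (1 / p) ≤ 2 ^ m)
    (hf : ApproxMidpointAffineOn δ (closedBall (0 : X) 1) f) (hodd : f.Odd) {D : ℝ}
    (hD : ∀ x ∈ closedBall (0 : X) 1, |f x| ≤ D) {η : ℝ} (hη : 0 < η) :
    ∃ g : X →ₗ[ℝ] ℝ, ∀ x ∈ closedBall (0 : X) 1, |f x - g x| ≤ (m + 2) * δ + η := by
  have hδ : 0 ≤ δ :=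
    (abs_nonneg _).trans (hf (mem_closedBall_self zero_le_one) (mem_closedBall_self zero_le_one))
  have hiterate (k : ℕ) : ∃ g : X →ₗ[ℝ] ℝ, ∀ x ∈ closedBall (0 : X) 1,
      |f x - g x| ≤ (1 / 2) ^ k * D + (m + 2) * δ := by
    induction k with
    | zero => exact ⟨0, fun x hx ↦ by simpa using le_add_of_le_of_nonneg (hD x hx) (by positivity)⟩
    | succ k ih =>
      obtain ⟨g, hg⟩ := ih
      have hodd_sub : (fun x ↦ f x - g x).Odd := fun x ↦ by simp only [hodd x, map_neg]; ring
      obtain ⟨g', hg'⟩ :=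
        hX.exists_linearMap_abs_sub_le_half hp hT hm (hf.sub_linearMap g) hodd_sub hg
      refine ⟨g + g', fun x hx ↦ ?_⟩
      rw [LinearMap.add_apply, ← sub_sub]
      exact (hg' x hx).trans_eq (by ring)
  have hlim : Filter.Tendsto (fun k : ℕ ↦ (1 / 2 : ℝ) ^ k * D) Filter.atTop (𝓝 0) := by
    simpa using (tendsto_pow_atTop_nhds_zero_of_lt_one (by norm_num)
      (by norm_num : (1 / 2 : ℝ) < 1)).mul_const D
  obtain ⟨k, hk⟩ := (hlim.eventually_lt_const hη).exists
  obtain ⟨g, hg⟩ := hiterate k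
  exact ⟨g, fun x hx ↦ (hg x hx).trans (by linarith)⟩

end HasTypeConst

section Constants

variable {p T : ℝ}

theorem exists_nat_mul_rpow_le (hp : 1 < p) {A : ℝ} (hA : 1 ≤ A) :
    ∃ m : ℕ, A * ((2 : ℝ) ^ m) ^ (1 / p) ≤ 2 ^ m ∧ (m : ℝ) ≤ p / (p - 1) * Real.logb 2 A + 1 := by
  have hp0 : 0 < p := by linarith
  have hp1 : 0 < p - 1 := by linarith
  set L := p / (p - 1) * Real.logb 2 A with hL
  have hL0 : 0 ≤ L := mul_nonneg (by positivity) (Real.logb_nonneg one_lt_two hA)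
  refine ⟨⌈L⌉₊, ?_, (Nat.ceil_lt_add_one hL0).le⟩
  have hexponent : Real.logb 2 A + ⌈L⌉₊ * (1 / p) ≤ ⌈L⌉₊ :=
    calc Real.logb 2 A + ⌈L⌉₊ * (1 / p) = L * ((p - 1) / p) + ⌈L⌉₊ * (1 / p) := by
          rw [hL]; field_simp
      _ ≤ ⌈L⌉₊ * ((p - 1) / p) + ⌈L⌉₊ * (1 / p) := by gcongr; exact Nat.le_ceil L
      _ = ⌈L⌉₊ := by field_simp; ring
  calc A * ((2 : ℝ) ^ ⌈L⌉₊) ^ (1 / p) = 2 ^ (Real.logb 2 A + ⌈L⌉₊ * (1 / p)) := by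
        rw [Real.rpow_add two_pos, Real.rpow_logb two_pos (by norm_num) (by linarith),
          Real.rpow_mul zero_le_two, Real.rpow_natCast]
    _ ≤ 2 ^ (⌈L⌉₊ : ℝ) := Real.rpow_le_rpow_of_exponent_le one_le_two hexponent
    _ = 2 ^ ⌈L⌉₊ := Real.rpow_natCast _ _

theorem logb_two_eight_mul_le (hT : 1 ≤ T) : Real.logb 2 (8 * T) ≤ 3 + 2 * Real.log T := by
  have hlog8 : Real.logb 2 8 = 3 := by
    rw [show (8 : ℝ) = 2 ^ (3 : ℝ) by norm_num, Real.logb_rpow two_pos (by norm_num)]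
  have hlogT : Real.logb 2 T ≤ 2 * Real.log T := by
    rw [Real.logb, div_le_iff₀ (Real.log_pos one_lt_two)]
    nlinarith [Real.log_two_gt_d9, Real.log_nonneg hT]
  rw [Real.logb_mul (by norm_num) (by linarith), hlog8]
  linarith

theorem mul_logb_two_add_le (hp : 1 < p) (hT : 1 ≤ T) :
    p / (p - 1) * Real.logb 2 (8 * T) + 9 / 2 ≤ 8 * (p / (p - 1)) * (1 + Real.log T) := by
  have hq : 1 ≤ p / (p - 1) := (one_le_div (by linarith)).mpr (by linarith)
  have hlog := Real.log_nonneg hT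
  calc p / (p - 1) * Real.logb 2 (8 * T) + 9 / 2
      ≤ p / (p - 1) * (3 + 2 * Real.log T) + p / (p - 1) * (5 + 6 * Real.log T) := by
        gcongr
        · exact logb_two_eight_mul_le hT
        · nlinarith
    _ = 8 * (p / (p - 1)) * (1 + Real.log T) := by ring

theorem mul_conjExponent_le (hp : 1 < p) (hp2 : p ≤ 2) (hT : 1 ≤ T) :
    8 * (p / (p - 1)) * (1 + Real.log T) ≤
      16 * (p - 1)⁻¹ * (1 + |Real.log (p - 1)| + Real.log T) := by
  have hlog := Real.log_nonneg hT
  have hp1 : 0 < (p - 1)⁻¹ := inv_pos.mpr (by linarith)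
  calc 8 * (p / (p - 1)) * (1 + Real.log T) = 8 * p * (p - 1)⁻¹ * (1 + Real.log T) := by ring
    _ ≤ 16 * (p - 1)⁻¹ * (1 + |Real.log (p - 1)| + Real.log T) := by
      gcongr
      · linarith
      · exact le_add_of_nonneg_right (abs_nonneg _)

end Constants

theorem whitney_two_type_bound_general {X : Type*} [NormedAddCommGroup X] [NormedSpace ℝ X]
    {p T δ : ℝ} (hp : 1 < p) (hT : 1 ≤ T) (hX : HasTypeConst X p T) (hδ : 0 < δ) {f : X → ℝ}
    (hbdd : (𝓝 (0 : X)).IsBoundedUnder (· ≤ ·) (|f ·|)) (hf : diffBound 2 (closedBall 0 1) f δ) :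
    ∃ (c : ℝ) (g : X →ₗ[ℝ] ℝ), ∀ x ∈ closedBall (0 : X) 1,
      |f x - (c + g x)| ≤ 8 * (p / (p - 1)) * (1 + Real.log T) * δ := by
  have hmid := hf.approxMidpointAffineOn (convex_closedBall 0 1)
  have hneg : ∀ x ∈ closedBall (0 : X) 1, -x ∈ closedBall 0 1 := by simp
  obtain ⟨D, hD⟩ := (hmid.oddPart_of_neg_mem hneg).exists_abs_le_of_isBoundedUnder
    (odd_oddPart f).map_zero (isBoundedUnder_abs_oddPart hbdd)
  obtain ⟨m, hm, hm_le⟩ := exists_nat_mul_rpow_le hp (by linarith : 1 ≤ 8 * T)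
  obtain ⟨g, hg⟩ := hX.exists_linearMap_abs_sub_le_add hp.le (by linarith) hm
    (hmid.oddPart_of_neg_mem hneg) (odd_oddPart f) hD hδ
  refine ⟨f 0, g, fun x hx ↦ ?_⟩
  calc |f x - (f 0 + g x)| ≤ |f x - f 0 - oddPart f x| + |oddPart f x - g x| := by
        rw [← sub_sub]; exact abs_sub_le _ _ _
    _ ≤ δ / 2 + ((m + 2) * δ + δ) := add_le_add (hmid.abs_sub_oddPart_le hx (hneg x hx)) (hg x hx)
    _ = (m + 7 / 2) * δ := by ring
    _ ≤ 8 * (p / (p - 1)) * (1 + Real.log T) * δ := by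
      gcongr
      linarith [mul_logb_two_add_le hp hT]

/-- Theorem 3.11: `w₂(X) ≤ C (p−1)⁻¹ (1 + |log(p−1)| + log T_p(X))`. -/
theorem whitney_two_type_bound :
    ∃ C : ℝ, ∀ p : ℝ, 1 < p → p ≤ 2 →
      ∀ (X : Type) [NormedAddCommGroup X] [NormedSpace ℝ X], FiniteDimensional ℝ X →
        ∀ T : ℝ, 1 ≤ T → HasTypeConst X p T →
          ∀ f : X → ℝ, ContinuousOn f (Metric.closedBall 0 1) →
            diffBound 2 (Metric.closedBall 0 1) f 1 →
            ∃ (c : ℝ) (g : X →ₗ[ℝ] ℝ), ∀ x ∈ Metric.closedBall (0 : X) 1,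
              |f x - (c + g x)| ≤ C * (p - 1)⁻¹ * (1 + |Real.log (p - 1)| + Real.log T) := by
  refine ⟨16, fun p hp hp2 X _ _ _ T hT hX f hfc hf ↦ ?_⟩
  have hbdd := (hfc.continuousAt (closedBall_mem_nhds 0 one_pos)).abs.isBoundedUnder_le
  obtain ⟨c, g, hg⟩ := whitney_two_type_bound_general hp hT hX one_pos hbdd hf
  exact ⟨c, g, fun x hx ↦ (hg x hx).trans (by simpa using mul_conjExponent_le hp hp2 hT)⟩
end
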